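/- arXiv:2409.05619 — 2 statements merged into one kernel-verified Lean document; each statement's English description precedes it below -/
import Mathlib

section
/- Suppose the family {ρ_{x,s}} satisfies Assumption A. For every n≥1 and every R̂>0 there exists a matrix T_n on (ℂ^𝒳)^{⊗n}⊗H_B^{⊗n} with 0⪯T_n⪯I such that, for every probability distribution P on 𝒳, every t∈(0,1), every ε>0, and every finite 𝒮_ε ⊆ 𝒮 witnessing Assumption A at ε (i.e. such that for every s∈𝒮 there is s̄∈𝒮_ε with ρ_{x,s} ⪯ (1+ε)ρ_{x,s̄} for all x∈𝒳): (i) for all s^n∈𝒮^n, Tr[(I−T_n)ρ^{XB}_{P,s^n}] ≤ (n+1)^{|𝒮_ε|−1 + t|𝒳|(d_B−1)d_B/2 + (d_B−1)|𝒳|t} · (1+ε)^n · 2^{n·t·(R̂ − min_Q I_{1−t}[X;B]_{P,Q})}, the minimum over probability distributions Q supported on 𝒮_ε; and (ii) for every density matrix σ on H_B^{⊗n}, Tr[T_n(ρ_P^{⊗n}⊗σ)] ≤ n^{d_B(d_B−1)/2}·Λ(n,d_B)·2^{−n·R̂}. -/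
open scoped ComplexOrder

noncomputable section

/-- A density matrix: positive semidefinite with unit trace. -/
def IsDensity {m : Type*} [Fintype m] (ρ : Matrix m m ℂ) : Prop :=
  ρ.PosSemidef ∧ ρ.trace = 1

/-- Functional calculus for Hermitian matrices (junk value `0` on non-Hermitian input). -/
def matFun {m : Type*} [Fintype m] [DecidableEq m] (f : ℝ → ℝ) (A : Matrix m m ℂ) :
    Matrix m m ℂ :=
  if hA : A.IsHermitian then
    (hA.eigenvectorUnitary : Matrix m m ℂ) *
        Matrix.diagonal (fun i => (f (hA.eigenvalues i) : ℂ)) *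
      star (hA.eigenvectorUnitary : Matrix m m ℂ)
  else 0

/-- Matrix power, taken on the support (`0^p := 0` on the kernel). -/
def mpow {m : Type*} [Fintype m] [DecidableEq m] (A : Matrix m m ℂ) (p : ℝ) :
    Matrix m m ℂ :=
  matFun (fun u => if u ≤ 0 then 0 else u ^ p) A

/-- The classical–quantum state `Σ_x w(x) |x⟩⟨x| ⊗ ρ_x`. -/
def cqState {X B : Type*} [DecidableEq X] (w : X → ℝ) (ρ : X → Matrix B B ℂ) :
    Matrix (X × B) (X × B) ℂ :=
  Matrix.of fun p q => (if p.1 = q.1 then ((w p.1 : ℝ) : ℂ) else 0) * ρ p.1 p.2 q.2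

/-- Tensor product of a finite family of matrices, realized on functions. -/
def tensorFam {k d : Type*} [Fintype k] (ρ : k → Matrix d d ℂ) :
    Matrix (k → d) (k → d) ℂ :=
  Matrix.of fun i j => ∏ a, ρ a (i a) (j a)

/-- `Λ(n,d)`: the number of partitions of `n` into at most `d` parts. -/
def numPartLe (n d : ℕ) : ℕ := Nat.card {p : Nat.Partition n // p.parts.card ≤ d}

/-- The Rényi-type quantity `I_{1−t}[X;B]_{P,Q}`, given the mixed states `ρQ x`. -/
def renyiI {𝒳 : Type*} [Fintype 𝒳] {d : ℕ} (P : 𝒳 → ℝ)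
    (ρQ : 𝒳 → Matrix (Fin d) (Fin d) ℂ) (t : ℝ) : ℝ :=
  -((1 - t) / t) * Real.logb 2
    (Matrix.trace (mpow (∑ x, P x • mpow (ρQ x) (1 - t)) (1 / (1 - t)))).re

/-- Probability distributions on a finite set `𝒮`. -/
abbrev ProbVec (𝒮 : Type*) [Fintype 𝒮] : Type _ :=
  {Q : 𝒮 → ℝ // (∀ s, 0 ≤ Q s) ∧ ∑ s, Q s = 1}

/-- Loewner order `A ⪯ B`. -/
def Loewner {m : Type*} [Fintype m] (A B : Matrix m m ℂ) : Prop :=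
  (B - A).PosSemidef

/-- Assumption A. -/
def AssumptionA {𝒳 𝒮 : Type*} {d : ℕ} (ρ : 𝒳 → 𝒮 → Matrix (Fin d) (Fin d) ℂ) : Prop :=
  ∀ ε : ℝ, 0 < ε → ∃ Sε : Finset 𝒮, ∀ s : 𝒮, ∃ s' ∈ Sε, ∀ x : 𝒳,
    Loewner (ρ x s) ((1 + ε) • ρ x s')

section Part1
open Matrix

section LA
variable {m : Type*} [Fintype m] [DecidableEq m]

lemma la_spectral {A : Matrix m m ℂ} (hA : A.IsHermitian) :
    A = (hA.eigenvectorUnitary : Matrix m m ℂ) * diagonal (fun i => (hA.eigenvalues i : ℂ)) *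
      (hA.eigenvectorUnitary : Matrix m m ℂ)ᴴ := by
  have h := hA.spectral_theorem
  rw [Unitary.conjStarAlgAut_apply] at h
  simpa [Function.comp_def, star_eq_conjTranspose] using h

lemma la_uu {A : Matrix m m ℂ} (hA : A.IsHermitian) :
    (hA.eigenvectorUnitary : Matrix m m ℂ)ᴴ * (hA.eigenvectorUnitary : Matrix m m ℂ) = 1 := by
  have := Unitary.coe_star_mul_self hA.eigenvectorUnitary
  simpa [star_eq_conjTranspose] using this

/-- Uniqueness of the functional calculus. -/
lemma matFun_eq (f : ℝ → ℝ) {A U : Matrix m m ℂ} {a : m → ℝ} (hU : Uᴴ * U = 1)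
    (hA : A = U * diagonal (fun i => (a i : ℂ)) * Uᴴ) :
    matFun f A = U * diagonal (fun i => (f (a i) : ℂ)) * Uᴴ := by
  have hU' : U * Uᴴ = 1 := mul_eq_one_comm.mp hU
  have hH : A.IsHermitian := by
    rw [hA]
    apply isHermitian_mul_mul_conjTranspose
    exact isHermitian_diagonal_of_self_adjoint _ (by ext i; simp)
  rw [matFun, dif_pos hH]
  have hs := la_spectral hH
  have hv := la_uu hH
  rw [star_eq_conjTranspose]
  generalize (hH.eigenvectorUnitary : Matrix m m ℂ) = V at *
  generalize hH.eigenvalues = b at *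
  have hv' : V * Vᴴ = 1 := mul_eq_one_comm.mp hv
  have h1 : diagonal (fun i => (b i : ℂ)) * (Vᴴ * U) = (Vᴴ * U) * diagonal (fun i => (a i : ℂ)) := by
    have : Vᴴ * A * U = Vᴴ * A * U := rfl
    nth_rw 1 [hs] at this
    rw [hA] at this
    calc _ = (Vᴴ * V) * (diagonal (fun i => (b i : ℂ)) * (Vᴴ * U)) := by rw [hv, one_mul]
      _ = Vᴴ * (V * diagonal (fun i => (b i : ℂ)) * Vᴴ) * U := by simp only [mul_assoc]
      _ = _ := this
      _ = (Vᴴ * U) * diagonal (fun i => (a i : ℂ)) * (Uᴴ * U) := by simp only [mul_assoc]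
      _ = _ := by rw [hU, mul_one]
  have h2 : diagonal (fun i => (f (b i) : ℂ)) * (Vᴴ * U)
      = (Vᴴ * U) * diagonal (fun i => (f (a i) : ℂ)) := by
    ext i j
    have := congrFun (congrFun h1 i) j
    rw [diagonal_mul, mul_diagonal] at this ⊢
    by_cases hw : (Vᴴ * U) i j = 0
    · simp [hw]
    · have h3 : (b i : ℂ) = a j := by
        rw [mul_comm] at this
        exact mul_left_cancel₀ hw this
      rw [Complex.ofReal_inj.mp h3, mul_comm]
  calc _ = V * diagonal (fun i => (f (b i) : ℂ)) * Vᴴ * (U * Uᴴ) := by rw [hU', mul_one]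
    _ = V * (diagonal (fun i => (f (b i) : ℂ)) * (Vᴴ * U)) * Uᴴ := by simp only [mul_assoc]
    _ = (V * Vᴴ) * (U * diagonal (fun i => (f (a i) : ℂ)) * Uᴴ) := by
      rw [h2]; simp only [mul_assoc]
    _ = _ := by rw [hv', one_mul]

lemma la_psd_decomp {A : Matrix m m ℂ} (hA : A.PosSemidef) :
    ∃ (U : Matrix m m ℂ) (a : m → ℝ), Uᴴ * U = 1 ∧ (∀ i, 0 ≤ a i) ∧
      A = U * diagonal (fun i => (a i : ℂ)) * Uᴴ :=
  ⟨_, _, la_uu hA.1, hA.eigenvalues_nonneg, la_spectral hA.1⟩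

lemma la_conj_psd (U : Matrix m m ℂ) {a : m → ℝ} (ha : ∀ i, 0 ≤ a i) :
    (U * diagonal (fun i => (a i : ℂ)) * Uᴴ).PosSemidef := by
  apply PosSemidef.mul_mul_conjTranspose_same
  exact PosSemidef.diagonal (fun i => by simpa using ha i)

lemma la_trace_conj {U : Matrix m m ℂ} (hU : Uᴴ * U = 1) (a : m → ℝ) :
    (U * diagonal (fun i => (a i : ℂ)) * Uᴴ).trace = ((∑ i, a i : ℝ) : ℂ) := by
  rw [trace_mul_cycle, hU, one_mul, trace_diagonal]; push_cast; rfl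

lemma la_sq {A : Matrix m m ℂ} (hA : A.PosSemidef) : ∃ B : Matrix m m ℂ, A = Bᴴ * B := by
  obtain ⟨U, a, hU, ha, rfl⟩ := la_psd_decomp hA
  refine ⟨diagonal (fun i => (Real.sqrt (a i) : ℂ)) * Uᴴ, ?_⟩
  rw [conjTranspose_mul, conjTranspose_conjTranspose, diagonal_conjTranspose]
  have : diagonal (fun i => (a i : ℂ)) = diagonal (star fun i => (Real.sqrt (a i) : ℂ)) *
      diagonal (fun i => (Real.sqrt (a i) : ℂ)) := by
    rw [diagonal_mul_diagonal]
    congr 1; ext i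
    simp only [Pi.star_apply, RCLike.star_def, Complex.conj_ofReal]
    rw [← Complex.ofReal_mul, Real.mul_self_sqrt (ha i)]
  rw [this]; simp only [mul_assoc]

lemma la_trace_mul_nonneg {A B : Matrix m m ℂ} (hA : A.PosSemidef) (hB : B.PosSemidef) :
    0 ≤ (A * B).trace.re := by
  obtain ⟨C, rfl⟩ := la_sq hA
  rw [mul_assoc, trace_mul_comm]
  have : (C * B * Cᴴ).PosSemidef := hB.mul_mul_conjTranspose_same C
  exact (Complex.le_def.mp this.trace_nonneg).1

lemma la_trace_mono_right {A B C : Matrix m m ℂ} (hA : A.PosSemidef) (h : (C - B).PosSemidef) :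
    (A * B).trace.re ≤ (A * C).trace.re := by
  have := la_trace_mul_nonneg hA h
  rw [mul_sub, trace_sub, Complex.sub_re] at this
  linarith

lemma la_trace_mono_left {A B C : Matrix m m ℂ} (hA : A.PosSemidef) (h : (C - B).PosSemidef) :
    (B * A).trace.re ≤ (C * A).trace.re := by
  rw [trace_mul_comm B, trace_mul_comm C]
  exact la_trace_mono_right hA h

lemma la_psd_trace_re {A : Matrix m m ℂ} (hA : A.PosSemidef) : (A.trace.re : ℂ) = A.trace := by
  have := hA.trace_nonneg
  have h2 := (Complex.le_def.mp this).2
  apply Complex.ext <;> simp [← h2]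

lemma la_le_trace {A : Matrix m m ℂ} (hA : A.PosSemidef) :
    ((A.trace.re : ℂ) • (1 : Matrix m m ℂ) - A).PosSemidef := by
  rw [la_psd_trace_re hA]
  obtain ⟨U, a, hU, ha, rfl⟩ := la_psd_decomp hA
  have hU' : U * Uᴴ = 1 := mul_eq_one_comm.mp hU
  rw [la_trace_conj hU]
  have : (((∑ i, a i : ℝ) : ℂ) • (1 : Matrix m m ℂ) - U * diagonal (fun i => (a i : ℂ)) * Uᴴ)
      = U * diagonal (fun i => ((∑ j, a j - a i : ℝ) : ℂ)) * Uᴴ := by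
    have : diagonal (fun i => ((∑ j, a j - a i : ℝ) : ℂ)) =
        ((∑ i, a i : ℝ) : ℂ) • (1 : Matrix m m ℂ) - diagonal (fun i => (a i : ℂ)) := by
      rw [smul_one_eq_diagonal, diagonal_sub]; push_cast; rfl
    rw [this, mul_sub, sub_mul, Matrix.mul_smul, mul_one, smul_mul_assoc, hU']
  rw [this]
  apply la_conj_psd
  intro i
  have := Finset.single_le_sum (f := a) (fun j _ => ha j) (Finset.mem_univ i)
  linarith

/-- Joint diagonalization. -/
lemma la_joint {A B : Matrix m m ℂ} (hA : A.IsHermitian) (hB : B.IsHermitian) (hAB : A * B = B * A) :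
    ∃ (U : Matrix m m ℂ) (a b : m → ℝ), Uᴴ * U = 1 ∧
      A = U * diagonal (fun i => (a i : ℂ)) * Uᴴ ∧ B = U * diagonal (fun i => (b i : ℂ)) * Uᴴ := by
  classical
  set TA := toEuclideanLin A with hTA
  set TB := toEuclideanLin B with hTB
  have sA : TA.IsSymmetric := isHermitian_iff_isSymmetric.mp hA
  have sB : TB.IsSymmetric := isHermitian_iff_isSymmetric.mp hB
  have hc : Commute TA TB := by
    rw [hTA, hTB]
    show toEuclideanLin A ∘ₗ toEuclideanLin B = toEuclideanLin B ∘ₗ toEuclideanLin A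
    apply LinearMap.ext
    intro v
    simp [toLpLin_apply, hAB]
  have hds := sA.directSum_isInternal_of_commute sB hc
  have hds' := (DirectSum.isInternal_ne_bot_iff).mpr hds
  have hfin := WellFoundedGT.finite_ne_bot_of_iSupIndep hds.submodule_iSupIndep
  have : Finite {i : ℂ × ℂ // Module.End.eigenspace TA i.2 ⊓ Module.End.eigenspace TB i.1 ≠ ⊥} := hfin
  haveI := Fintype.ofFinite
    {i : ℂ × ℂ // Module.End.eigenspace TA i.2 ⊓ Module.End.eigenspace TB i.1 ≠ ⊥}
  have hof := LinearMap.IsSymmetric.orthogonalFamily_eigenspace_inf_eigenspace sA sB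
  have hof' : OrthogonalFamily ℂ
    (fun i : {i : ℂ × ℂ // Module.End.eigenspace TA i.2 ⊓ Module.End.eigenspace TB i.1 ≠ ⊥} =>
      ((Module.End.eigenspace TA i.1.2 ⊓ Module.End.eigenspace TB i.1.1 :
        Submodule ℂ (EuclideanSpace ℂ m))))
    (fun i => Submodule.subtypeₗᵢ _) := hof.comp Subtype.val_injective
  have hn : Module.finrank ℂ (EuclideanSpace ℂ m) = Fintype.card m := by simp
  let e := hds'.subordinateOrthonormalBasis hn hof'
  let v : OrthonormalBasis m ℂ (EuclideanSpace ℂ m) := e.reindex (Fintype.equivFin m).symm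
  have hv : ∀ k, ∃ i : ℂ × ℂ, TA (v k) = i.2 • v k ∧ TB (v k) = i.1 • v k := by
    intro k
    have := hds'.subordinateOrthonormalBasis_subordinate hn (Fintype.equivFin m k) hof'
    refine ⟨(hds'.subordinateOrthonormalBasisIndex hn (Fintype.equivFin m k) hof').1, ?_⟩
    rw [Submodule.mem_inf, Module.End.mem_eigenspace_iff, Module.End.mem_eigenspace_iff] at this
    simpa [v, e] using this
  choose i hi1 hi2 using hv
  have key : ∀ (C : Matrix m m ℂ) (TC) (hTC : TC = toEuclideanLin C) (sC : TC.IsSymmetric)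
      (l : m → ℂ), (∀ k, TC (v k) = l k • v k) →
      C = (Matrix.of fun r k => v k r) * diagonal (fun k => (((l k).re : ℝ) : ℂ)) *
        (Matrix.of fun r k => v k r)ᴴ := by
    intro C TC hTC sC l hl
    have hre : ∀ k, (((l k).re : ℝ) : ℂ) = l k := by
      intro k
      have hne : v k ≠ 0 := v.orthonormal.ne_zero k
      have := sC.conj_eigenvalue_eq_self (μ := l k)
        (Module.End.hasEigenvalue_of_hasEigenvector ⟨Module.End.mem_eigenspace_iff.mpr (hl k), hne⟩)
      exact Complex.conj_eq_iff_re.mp this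
    simp only [hre]
    have hUU : (Matrix.of fun r k => v k r) * (Matrix.of fun r k => v k r : Matrix m m ℂ)ᴴ = 1 := by
      rw [mul_eq_one_comm]
      ext r k
      have := orthonormal_iff_ite.mp v.orthonormal r k
      simp only [mul_apply, conjTranspose_apply, of_apply, one_apply]
      rw [← this, PiLp.inner_apply]
      simp [mul_comm]
    have h2 : C * (Matrix.of fun r k => v k r) = (Matrix.of fun r k => v k r) * diagonal l := by
      ext r k
      rw [mul_diagonal]
      have := congrArg (fun w : EuclideanSpace ℂ m => w r) (hl k)
      rw [hTC] at this
      simp [toLpLin_apply, mulVec, dotProduct] at this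
      simp [mul_apply, this, mul_comm]
    rw [← h2, mul_assoc, hUU, mul_one]
  refine ⟨Matrix.of fun r k => v k r, fun k => (i k).2.re, fun k => (i k).1.re, ?_,
    key A TA hTA sA _ hi1, key B TB hTB sB _ hi2⟩
  ext r k
  have := orthonormal_iff_ite.mp v.orthonormal r k
  simp only [mul_apply, conjTranspose_apply, of_apply, one_apply]
  rw [← this, PiLp.inner_apply]
  simp [mul_comm]

end LA

end Part1

section Part2
open Matrix

section LB
variable {m : Type*} [Fintype m] [DecidableEq m]

/-- scalar power on the support -/
def spow (p u : ℝ) : ℝ := if u ≤ 0 then 0 else u ^ p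

lemma spow_nonneg (p u : ℝ) : 0 ≤ spow p u := by
  unfold spow; split_ifs with h
  · exact le_rfl
  · exact Real.rpow_nonneg (by linarith) _

lemma spow_eq {p u : ℝ} (hp : p ≠ 0) (hu : 0 ≤ u) : spow p u = u ^ p := by
  unfold spow; split_ifs with h
  · rw [le_antisymm h hu, Real.zero_rpow hp]
  · rfl

lemma mpow_eq (p : ℝ) {A U : Matrix m m ℂ} {a : m → ℝ} (hU : Uᴴ * U = 1)
    (hA : A = U * diagonal (fun i => (a i : ℂ)) * Uᴴ) :
    mpow A p = U * diagonal (fun i => (spow p (a i) : ℂ)) * Uᴴ :=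
  matFun_eq (spow p) hU hA

lemma mpow_psd {A : Matrix m m ℂ} (p : ℝ) (hA : A.PosSemidef) : (mpow A p).PosSemidef := by
  obtain ⟨U, a, hU, ha, hA⟩ := la_psd_decomp hA
  rw [mpow_eq p hU hA]
  exact la_conj_psd U fun i => spow_nonneg _ _

lemma cj_mul {U : Matrix m m ℂ} (hU : Uᴴ * U = 1) (f g : m → ℝ) :
    (U * diagonal (fun i => (f i : ℂ)) * Uᴴ) * (U * diagonal (fun i => (g i : ℂ)) * Uᴴ) =
      U * diagonal (fun i => ((f i * g i : ℝ) : ℂ)) * Uᴴ := by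
  calc _ = U * diagonal (fun i => (f i : ℂ)) * (Uᴴ * U) * diagonal (fun i => (g i : ℂ)) * Uᴴ := by
        simp only [mul_assoc]
    _ = U * (diagonal (fun i => (f i : ℂ)) * diagonal (fun i => (g i : ℂ))) * Uᴴ := by
        rw [hU, mul_one]; simp only [mul_assoc]
    _ = _ := by rw [diagonal_mul_diagonal]; push_cast; rfl

lemma cj_sub (U : Matrix m m ℂ) (f g : m → ℝ) :
    (U * diagonal (fun i => (f i : ℂ)) * Uᴴ) - (U * diagonal (fun i => (g i : ℂ)) * Uᴴ) =
      U * diagonal (fun i => ((f i - g i : ℝ) : ℂ)) * Uᴴ := by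
  have : diagonal (fun i => ((f i - g i : ℝ) : ℂ)) =
    diagonal (fun i => (f i : ℂ)) - diagonal (fun i => (g i : ℂ)) := by
    rw [diagonal_sub]; push_cast; rfl
  rw [this, mul_sub, sub_mul]

lemma cj_smul (U : Matrix m m ℂ) (c : ℝ) (g : m → ℝ) :
    ((c : ℂ) • (U * diagonal (fun i => (g i : ℂ)) * Uᴴ)) =
      U * diagonal (fun i => ((c * g i : ℝ) : ℂ)) * Uᴴ := by
  have : diagonal (fun i => ((c * g i : ℝ) : ℂ)) =
    (c : ℂ) • diagonal (fun i => (g i : ℂ)) := by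
    rw [← diagonal_smul]; push_cast; rfl
  rw [this, Matrix.mul_smul, smul_mul_assoc]

lemma conj_psd_iff {U : Matrix m m ℂ} (hU : Uᴴ * U = 1) {a : m → ℝ}
    (h : (U * diagonal (fun i => (a i : ℂ)) * Uᴴ).PosSemidef) (i : m) : 0 ≤ a i := by
  have h2 := h.conjTranspose_mul_mul_same U
  have h3 : Uᴴ * (U * diagonal (fun i => (a i : ℂ)) * Uᴴ) * U = diagonal (fun i => (a i : ℂ)) := by
    calc _ = (Uᴴ * U) * diagonal (fun i => (a i : ℂ)) * (Uᴴ * U) := by simp only [mul_assoc]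
      _ = _ := by rw [hU, one_mul, mul_one]
  rw [h3] at h2
  have := h2.diag_nonneg (i := i)
  simpa using this

lemma mpow_trace {A : Matrix m m ℂ} (p : ℝ) (hA : A.PosSemidef) :
    0 ≤ (mpow A p).trace.re :=
  (Complex.le_def.mp (mpow_psd p hA).trace_nonneg).1

/-- matrix Hölder -/
lemma la_holder {A B : Matrix m m ℂ} (hA : A.PosSemidef) (hB : B.PosSemidef) {t : ℝ}
    (ht : t ∈ Set.Ioo (0:ℝ) 1) :
    (mpow A t * B).trace.re ≤ A.trace.re ^ t * (mpow B (1 / (1 - t))).trace.re ^ (1 - t) := by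
  obtain ⟨ht0, ht1⟩ := ht
  obtain ⟨U, a, hU, ha, hA⟩ := la_psd_decomp hA
  obtain ⟨V, b, hV, hb, hB⟩ := la_psd_decomp hB
  have h1 : (mpow A t * B).trace.re
      = ∑ i, ∑ j, ‖(Uᴴ * V) i j‖ ^ 2 * (a i ^ t * b j) := by
    rw [mpow_eq t hU hA, hB]
    have : (U * diagonal (fun i => (spow t (a i) : ℂ)) * Uᴴ * (V * diagonal (fun i => (b i : ℂ)) * Vᴴ)).trace
        = (diagonal (fun i => (spow t (a i) : ℂ)) * (Uᴴ * V) *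
            (diagonal (fun i => (b i : ℂ)) * (Uᴴ * V)ᴴ)).trace := by
      rw [conjTranspose_mul, conjTranspose_conjTranspose, mul_assoc, mul_assoc U, trace_mul_comm U]
      simp only [mul_assoc]
    rw [this]
    generalize Uᴴ * V = W
    simp only [trace, diag, mul_apply, diagonal_mul, conjTranspose_apply]
    rw [Complex.re_sum]
    apply Finset.sum_congr rfl
    intro i _
    simp only [diagonal_apply, ite_mul, zero_mul, Finset.sum_ite_eq, Finset.mem_univ, if_true]
    rw [Complex.re_sum]
    apply Finset.sum_congr rfl
    intro j _
    rw [spow_eq ht0.ne' (ha i)]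
    have h2 : (↑(a i ^ t) * W i j * (↑(b j) * star (W i j)) : ℂ)
       = ((‖W i j‖ ^ 2 * (a i ^ t * b j) : ℝ) : ℂ) := by
      have := Complex.mul_conj' (W i j)
      push_cast
      rw [← this]
      simp only [RCLike.star_def]
      ring
    rw [h2, Complex.ofReal_re]
  have hUV : (Uᴴ * V) * (Uᴴ * V)ᴴ = 1 := by
    rw [conjTranspose_mul, conjTranspose_conjTranspose]
    calc _ = Uᴴ * (V * Vᴴ) * U := by simp only [mul_assoc]
      _ = _ := by rw [mul_eq_one_comm.mp hV, mul_one, hU]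
  have hUV' : (Uᴴ * V)ᴴ * (Uᴴ * V) = 1 := mul_eq_one_comm.mp hUV
  have htrA : A.trace.re = ∑ i, a i := by rw [hA, la_trace_conj hU, Complex.ofReal_re]
  have htrB : (mpow B (1 / (1 - t))).trace.re = ∑ j, b j ^ (1 / (1 - t)) := by
    rw [mpow_eq _ hV hB, la_trace_conj hV, Complex.ofReal_re]
    apply Finset.sum_congr rfl
    intro i _
    rw [spow_eq _ (hb i)]
    have : 1 - t ≠ 0 := by linarith
    positivity
  rw [h1, htrA, htrB]
  generalize Uᴴ * V = W at *
  have hrow : ∀ i, ∑ j, ‖W i j‖ ^ 2 = 1 := by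
    intro i
    have := congrFun (congrFun hUV i) i
    simp only [mul_apply, conjTranspose_apply, one_apply_eq] at this
    have h3 : ((∑ j, ‖W i j‖ ^ 2 : ℝ) : ℂ) = 1 := by
      rw [← this]; push_cast
      exact Finset.sum_congr rfl fun j _ => (Complex.mul_conj' (W i j)).symm
    exact_mod_cast h3
  have hcol : ∀ j, ∑ i, ‖W i j‖ ^ 2 = 1 := by
    intro j
    have := congrFun (congrFun hUV' j) j
    simp only [mul_apply, conjTranspose_apply, one_apply_eq] at this
    have h3 : ((∑ i, ‖W i j‖ ^ 2 : ℝ) : ℂ) = 1 := by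
      rw [← this]; push_cast
      exact Finset.sum_congr rfl fun i _ => (Complex.conj_mul' (W i j)).symm
    exact_mod_cast h3
  have hpq : (1 / t).HolderConjugate (1 / (1 - t)) := by
    rw [Real.holderConjugate_iff]
    refine ⟨by rw [lt_div_iff₀ ht0]; linarith, by simp⟩
  have hw : ∀ i j, (0:ℝ) ≤ ‖W i j‖ ^ 2 := fun i j => by positivity
  have ht' : 1 - t ≠ 0 := by linarith
  have H := Real.inner_le_Lp_mul_Lq_of_nonneg (s := (Finset.univ : Finset (m × m)))
    (f := fun q => (‖W q.1 q.2‖ ^ 2) ^ t * a q.1 ^ t)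
    (g := fun q => (‖W q.1 q.2‖ ^ 2) ^ (1 - t) * b q.2) hpq
    (fun q _ => mul_nonneg (Real.rpow_nonneg (hw _ _) _) (Real.rpow_nonneg (ha _) _))
    (fun q _ => mul_nonneg (Real.rpow_nonneg (hw _ _) _) (hb _))
  calc _ = ∑ q : m × m, ((‖W q.1 q.2‖ ^ 2) ^ t * a q.1 ^ t) * ((‖W q.1 q.2‖ ^ 2) ^ (1 - t) * b q.2) := by
        rw [Fintype.sum_prod_type]
        apply Finset.sum_congr rfl; intro i _
        apply Finset.sum_congr rfl; intro j _
        have : (‖W i j‖ ^ 2) ^ t * (‖W i j‖ ^ 2) ^ (1 - t) = ‖W i j‖ ^ 2 := by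
          rw [← Real.rpow_add_of_nonneg (hw i j) ht0.le (by linarith)]
          simp
        calc _ = ((‖W i j‖ ^ 2) ^ t * (‖W i j‖ ^ 2) ^ (1 - t)) * (a i ^ t * b j) := by rw [this]
          _ = _ := by ring
    _ ≤ _ := H
    _ = _ := by
      simp only [one_div_one_div]
      congr 2
      · rw [Fintype.sum_prod_type]
        apply Finset.sum_congr rfl; intro i _
        calc _ = ∑ j, ‖W i j‖ ^ 2 * a i := by
              apply Finset.sum_congr rfl; intro j _
              dsimp only
              rw [← Real.mul_rpow (hw _ _) (ha _), ← Real.rpow_mul (mul_nonneg (hw _ _) (ha _))]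
              rw [mul_one_div_cancel ht0.ne', Real.rpow_one]
          _ = _ := by rw [← Finset.sum_mul, hrow, one_mul]
      · rw [Fintype.sum_prod_type_right]
        apply Finset.sum_congr rfl; intro j _
        calc _ = ∑ i, ‖W i j‖ ^ 2 * b j ^ (1 / (1 - t)) := by
              apply Finset.sum_congr rfl; intro i _
              dsimp only
              rw [Real.mul_rpow (Real.rpow_nonneg (hw _ _) _) (hb _), ← Real.rpow_mul (hw _ _)]
              rw [mul_one_div_cancel ht', Real.rpow_one]
          _ = _ := by rw [← Finset.sum_mul, hcol, one_mul]

lemma scalar_test {u t : ℝ} (hu : 0 ≤ u) (ht : t ∈ Set.Ioo (0:ℝ) 1) : u / (1 + u) ≤ u ^ t := by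
  rcases le_total u 1 with h | h
  · calc u / (1 + u) ≤ u := div_le_self hu (by linarith)
      _ = u ^ (1:ℝ) := (Real.rpow_one u).symm
      _ ≤ u ^ t := by
        rcases hu.eq_or_lt with h0 | h0
        · rw [← h0, Real.zero_rpow one_ne_zero, Real.zero_rpow ht.1.ne']
        · exact Real.rpow_le_rpow_of_exponent_ge h0 h ht.2.le
  · calc u / (1 + u) ≤ 1 := by rw [div_le_one (by linarith)]; linarith
      _ ≤ u ^ t := Real.one_le_rpow h ht.1.le

/-- The test built out of two commuting operators. -/
lemma la_test {S R : Matrix m m ℂ} (hS : S.PosDef) (hR : R.PosSemidef) (hSR : S * R = R * S)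
    {c : ℝ} (hc : 0 < c) :
    ∃ T : Matrix m m ℂ, T.PosSemidef ∧ (1 - T).PosSemidef ∧
      (T * R).trace.re ≤ S.trace.re / c ∧
      ∀ t ∈ Set.Ioo (0:ℝ) 1, ∀ D : Matrix m m ℂ, D.PosSemidef → (S - D).PosSemidef →
        S * D = D * S →
        ((1 - T) * D).trace.re ≤ c ^ t * (mpow R t * mpow D (1 - t)).trace.re := by
  obtain ⟨U, a, b, hU, hSe, hRe⟩ := la_joint hS.1 hR.1 hSR
  have hU' : U * Uᴴ = 1 := mul_eq_one_comm.mp hU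
  have ha : ∀ i, 0 < a i := by
    intro i
    have h2 : (Uᴴ * S * U).PosDef := hS.conjTranspose_mul_mul_same (by
      intro v w h
      have : Uᴴ *ᵥ (U *ᵥ v) = Uᴴ *ᵥ (U *ᵥ w) := by rw [show U *ᵥ v = U *ᵥ w from h]
      simpa [mulVec_mulVec, hU] using this)
    have h3 : Uᴴ * S * U = diagonal (fun i => (a i : ℂ)) := by
      rw [hSe]
      calc _ = (Uᴴ * U) * diagonal (fun i => (a i : ℂ)) * (Uᴴ * U) := by simp only [mul_assoc]
        _ = _ := by rw [hU, one_mul, mul_one]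
    rw [h3] at h2
    have := h2.diag_pos (i := i)
    simpa using this
  have hb : ∀ i, 0 ≤ b i := fun i => conj_psd_iff hU (hRe ▸ hR) i
  have hone : (1 : Matrix m m ℂ) = U * diagonal (fun i => ((1 : ℝ) : ℂ)) * Uᴴ := by
    simp [hU']
  have hden : ∀ i, 0 < a i + c * b i := fun i => by
    have := mul_nonneg hc.le (hb i); linarith [ha i]
  refine ⟨U * diagonal (fun i => ((a i / (a i + c * b i) : ℝ) : ℂ)) * Uᴴ, ?_, ?_, ?_, ?_⟩
  · exact la_conj_psd U fun i => div_nonneg (ha i).le (hden i).le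
  · nth_rw 1 [hone]
    rw [cj_sub]
    refine la_conj_psd U fun i => ?_
    rw [sub_nonneg, div_le_one (hden i)]
    have := mul_nonneg hc.le (hb i); linarith
  · rw [hRe, hSe, cj_mul hU, la_trace_conj hU, la_trace_conj hU, Complex.ofReal_re, Complex.ofReal_re,
      Finset.sum_div]
    apply Finset.sum_le_sum
    intro i _
    rw [div_mul_eq_mul_div, div_le_div_iff₀ (hden i) hc]
    have := mul_nonneg hc.le (hb i)
    nlinarith [ha i]
  · intro t ht D hD hSD hcomm
    obtain ⟨ht0, ht1⟩ := ht
    have hx : ((1 - U * diagonal (fun i => ((a i / (a i + c * b i) : ℝ) : ℂ)) * Uᴴ) * D).trace.re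
        ≤ (((c ^ t : ℝ) : ℂ) • (mpow R t * mpow S (-t)) * D).trace.re := by
      apply la_trace_mono_left hD
      nth_rw 1 [hone]
      rw [mpow_eq t hU hRe, mpow_eq (-t) hU hSe, cj_mul hU, cj_smul, cj_sub, cj_sub]
      refine la_conj_psd U fun i => ?_
      rw [sub_nonneg]
      have h0 : 0 ≤ c * b i / a i := div_nonneg (mul_nonneg hc.le (hb i)) (ha i).le
      have hs := scalar_test h0 ⟨ht0, ht1⟩
      have e1 : 1 - a i / (a i + c * b i) = c * b i / a i / (1 + c * b i / a i) := by
        have := (ha i).ne'; have := (hden i).ne'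
        field_simp; ring
      have e2 : c ^ t * (spow t (b i) * spow (-t) (a i)) = (c * b i / a i) ^ t := by
        rw [spow_eq ht0.ne' (hb i), spow_eq (by linarith) (ha i).le, Real.rpow_neg (ha i).le,
          Real.div_rpow (mul_nonneg hc.le (hb i)) (ha i).le, Real.mul_rpow hc.le (hb i)]
        ring
      rw [e1, e2]; exact hs
    refine hx.trans ?_
    rw [smul_mul_assoc, trace_smul, smul_eq_mul, Complex.re_ofReal_mul, mul_assoc (mpow R t)]
    apply mul_le_mul_of_nonneg_left _ (Real.rpow_nonneg hc.le _)
    apply la_trace_mono_right (mpow_psd t hR)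
    obtain ⟨V, a', r, hV, hSe', hDe⟩ := la_joint hS.1 hD.1 hcomm
    have hr : ∀ i, 0 ≤ r i := fun i => conj_psd_iff hV (hDe ▸ hD) i
    have hra : ∀ i, r i ≤ a' i := fun i => by
      have := hSD
      rw [hSe', hDe, cj_sub] at this
      have := conj_psd_iff hV this i
      linarith
    rw [mpow_eq (1 - t) hV hDe, mpow_eq (-t) hV hSe']
    nth_rw 1 [hDe]
    rw [cj_mul hV, cj_sub]
    refine la_conj_psd V fun i => ?_
    rw [sub_nonneg]
    rcases (hr i).eq_or_lt with h | h
    · rw [← h]; simp [spow]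
    · have ha' : 0 < a' i := lt_of_lt_of_le h (hra i)
      rw [spow_eq (by linarith) ha'.le, spow_eq (by linarith) h.le, Real.rpow_sub h, Real.rpow_one,
        Real.rpow_neg ha'.le, div_eq_mul_inv, mul_comm]
      apply mul_le_mul_of_nonneg_left _ h.le
      apply inv_anti₀ (Real.rpow_pos_of_pos h t)
      exact Real.rpow_le_rpow h.le (hra i) ht0.le

end LB

end Part2

section Part3
open Matrix

section LC
variable {m : Type*} [Fintype m] [DecidableEq m]

/-- vectorization of matrices -/
def vecEquiv (m : Type*) [Fintype m] : Matrix m m ℂ ≃ₗ[ℂ] EuclideanSpace ℂ (m × m) :=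
  (LinearEquiv.curry ℂ ℂ m m).symm.trans (WithLp.linearEquiv 2 ℂ (m × m → ℂ)).symm

lemma vecEquiv_inner (X Y : Matrix m m ℂ) :
    inner ℂ (vecEquiv m X) (vecEquiv m Y) = (Xᴴ * Y).trace := by
  rw [PiLp.inner_apply]
  simp only [trace, diag, mul_apply, conjTranspose_apply]
  rw [Fintype.sum_prod_type_right]
  apply Finset.sum_congr rfl; intro i _
  apply Finset.sum_congr rfl; intro j _
  have e1 : ∀ Z : Matrix m m ℂ, (vecEquiv m Z).ofLp (j, i) = Z j i := fun Z => rfl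
  rw [e1, e1]
  simp [mul_comm]

lemma onb_exists (J : Submodule ℂ (Matrix m m ℂ)) :
    ∃ E : Fin (Module.finrank ℂ J) → Matrix m m ℂ, (∀ k, E k ∈ J) ∧
      (∀ k, ((E k)ᴴ * E k).trace = 1) ∧
      ∀ s ∈ J, s = ∑ k, ((E k)ᴴ * s).trace • E k := by
  let J' := J.map (vecEquiv m).toLinearMap
  have hfr : Module.finrank ℂ J' = Module.finrank ℂ J := LinearEquiv.finrank_map_eq (vecEquiv m) J
  let b := (stdOrthonormalBasis ℂ J').reindex (finCongr hfr)
  have hE : ∀ k, (vecEquiv m).symm (b k : EuclideanSpace ℂ (m × m)) ∈ J := by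
    intro k
    obtain ⟨x, hx, hx2⟩ := (b k).2
    rw [← hx2]
    simpa using hx
  refine ⟨fun k => (vecEquiv m).symm (b k : EuclideanSpace ℂ (m × m)), hE, ?_, ?_⟩
  · intro k
    rw [← vecEquiv_inner]
    simp only [LinearEquiv.apply_symm_apply]
    have := b.orthonormal.1 k
    rw [inner_self_eq_norm_sq_to_K]
    have h2 : ‖(b k : EuclideanSpace ℂ (m × m))‖ = 1 := this
    simp [h2]
  · intro s hs
    have hs' : vecEquiv m s ∈ J' := ⟨s, hs, rfl⟩
    have := b.sum_repr' ⟨vecEquiv m s, hs'⟩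
    have h2 := congrArg (fun z : J' => (vecEquiv m).symm (z : EuclideanSpace ℂ (m × m))) this
    simp only [LinearEquiv.symm_apply_apply] at h2
    refine h2.symm.trans ?_
    simp only [AddSubmonoidClass.coe_finsetSum, map_sum, Submodule.coe_smul, map_smul]
    apply Finset.sum_congr rfl; intro k _
    congr 1
    rw [← vecEquiv_inner]
    simp only [LinearEquiv.apply_symm_apply, Submodule.coe_inner]

lemma psd_smul {A : Matrix m m ℂ} (hA : A.PosSemidef) {c : ℝ} (hc : 0 ≤ c) :
    ((c : ℂ) • A).PosSemidef := hA.smul (by simpa using hc)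

/-- entries of a PSD matrix are bounded by its trace -/
lemma psd_entry {A : Matrix m m ℂ} (hA : A.PosSemidef) (i j : m) : ‖A i j‖ ≤ A.trace.re := by
  obtain ⟨B, rfl⟩ := la_sq hA
  have htr : (Bᴴ * B).trace.re = ∑ i, ∑ k, ‖B k i‖ ^ 2 := by
    simp only [trace, diag, mul_apply, conjTranspose_apply, Complex.re_sum]
    apply Finset.sum_congr rfl; intro i _
    apply Finset.sum_congr rfl; intro k _
    have := Complex.conj_mul' (B k i)
    rw [RCLike.star_def, this]
    norm_cast
  have hle : ∀ i, ∑ k, ‖B k i‖ ^ 2 ≤ (Bᴴ * B).trace.re := fun i => by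
    rw [htr]
    exact Finset.single_le_sum (f := fun i => ∑ k, ‖B k i‖ ^ 2)
      (fun i _ => Finset.sum_nonneg fun k _ => by positivity) (Finset.mem_univ i)
  rw [mul_apply]
  calc _ ≤ ∑ k, ‖Bᴴ i k * B k j‖ := norm_sum_le _ _
    _ ≤ ∑ k, (‖B k i‖ ^ 2 + ‖B k j‖ ^ 2) / 2 := by
      apply Finset.sum_le_sum; intro k _
      rw [norm_mul, conjTranspose_apply, norm_star]
      nlinarith [sq_nonneg (‖B k i‖ - ‖B k j‖)]
    _ = ((∑ k, ‖B k i‖ ^ 2) + ∑ k, ‖B k j‖ ^ 2) / 2 := by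
      rw [← Finset.sum_div, Finset.sum_add_distrib]
    _ ≤ _ := by linarith [hle i, hle j]

lemma isClosed_psd : IsClosed {A : Matrix m m ℂ | A.PosSemidef} := by
  have : {A : Matrix m m ℂ | A.PosSemidef} =
      {A | Aᴴ = A} ∩ ⋂ x : m → ℂ, {A | 0 ≤ star x ⬝ᵥ (A *ᵥ x)} := by
    ext A
    simp only [Set.mem_setOf_eq, posSemidef_iff_dotProduct_mulVec, Set.mem_inter_iff, Set.mem_iInter,
      IsHermitian]
  rw [this]
  apply IsClosed.inter
  · exact isClosed_eq (by fun_prop) continuous_id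
  · apply isClosed_iInter; intro x
    have h : {A : Matrix m m ℂ | 0 ≤ star x ⬝ᵥ (A *ᵥ x)} =
      (fun A => star x ⬝ᵥ (A *ᵥ x)) ⁻¹' {z : ℂ | 0 ≤ z} := rfl
    rw [h]
    refine IsClosed.preimage ?_ isClosed_Ici
    simp only [dotProduct, mulVec]
    fun_prop

lemma quad_mul_self (E : Matrix m m ℂ) (v : m → ℂ) :
    star v ⬝ᵥ ((E * Eᴴ) *ᵥ v) = ((∑ i, ‖(Eᴴ *ᵥ v) i‖ ^ 2 : ℝ) : ℂ) := by
  rw [← mulVec_mulVec, dotProduct_mulVec]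
  have : star v ᵥ* E = star (Eᴴ *ᵥ v) := by
    rw [star_mulVec, conjTranspose_conjTranspose]
  rw [this]
  simp only [dotProduct, Pi.star_apply, RCLike.star_def]
  push_cast
  exact Finset.sum_congr rfl fun i _ => Complex.conj_mul' _

lemma univ_op (M J : Submodule ℂ (Matrix m m ℂ)) (hmul : ∀ a ∈ M, ∀ b ∈ M, a * b ∈ M)
    (hstar : ∀ a ∈ M, aᴴ ∈ M) (hJM : J ≤ M)
    (hideal : ∀ a ∈ M, ∀ s ∈ J, a * s ∈ J)
    (hfaith : ∀ a ∈ M, (∀ s ∈ J, a * s = 0) → a = 0) :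
    ∃ σ ∈ M, σ.PosSemidef ∧ (∀ a ∈ M, a * σ = σ * a) ∧ σ.trace.re = Module.finrank ℂ J ∧
      ∀ τ ∈ M, τ.PosSemidef → ((τ.trace.re : ℂ) • σ - τ).PosSemidef := by
  obtain ⟨E, hEJ, hE1, hErep⟩ := onb_exists J
  have hσM : ∑ k, E k * (E k)ᴴ ∈ M :=
    M.sum_mem fun k _ => hmul _ (hJM (hEJ k)) _ (hstar _ (hJM (hEJ k)))
  have hσP : (∑ k, E k * (E k)ᴴ).PosSemidef :=
    posSemidef_sum _ fun k _ => posSemidef_self_mul_conjTranspose (E k)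
  -- domination of rank-one pieces
  have hdom : ∀ s ∈ J, (((s * sᴴ).trace.re : ℂ) • (∑ k, E k * (E k)ᴴ) - s * sᴴ).PosSemidef := by
    intro s hs
    have hsP := posSemidef_self_mul_conjTranspose s
    apply PosSemidef.of_dotProduct_mulVec_nonneg
    · exact (psd_smul hσP (Complex.le_def.mp hsP.trace_nonneg).1).1.sub hsP.1
    intro v
    have e1 : star v ⬝ᵥ ((∑ k, E k * (E k)ᴴ) *ᵥ v) =
        ((∑ k, ∑ i, ‖((E k)ᴴ *ᵥ v) i‖ ^ 2 : ℝ) : ℂ) := by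
      rw [sum_mulVec, dotProduct_sum]
      simp only [quad_mul_self]
      push_cast; rfl
    rw [sub_mulVec, dotProduct_sub, smul_mulVec, dotProduct_smul, e1, quad_mul_self, smul_eq_mul,
      ← Complex.ofReal_mul, ← Complex.ofReal_sub]
    rw [Complex.zero_le_real, sub_nonneg]
    set c : Fin (Module.finrank ℂ J) → ℂ := fun k => ((E k)ᴴ * s).trace with hc
    have hs2 : s = ∑ k, c k • E k := hErep s hs
    have hnorm : (s * sᴴ).trace.re = ∑ k, ‖c k‖ ^ 2 := by
      have : (s * sᴴ).trace = ∑ k, ((‖c k‖ ^ 2 : ℝ) : ℂ) := by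
        rw [trace_mul_comm]
        nth_rw 2 [hs2]
        rw [Finset.mul_sum, trace_sum]
        apply Finset.sum_congr rfl; intro k _
        rw [Matrix.mul_smul, trace_smul, smul_eq_mul]
        have : (sᴴ * E k).trace = star (c k) := by
          rw [hc]; simp only
          rw [← trace_conjTranspose, conjTranspose_mul, conjTranspose_conjTranspose]
        rw [this, RCLike.star_def, Complex.mul_conj']
        push_cast; rfl
      rw [this]; norm_cast
    have hv : sᴴ *ᵥ v = ∑ k, star (c k) • ((E k)ᴴ *ᵥ v) := by
      nth_rw 1 [hs2]
      rw [conjTranspose_sum, sum_mulVec]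
      apply Finset.sum_congr rfl; intro k _
      rw [conjTranspose_smul, smul_mulVec]
    rw [hnorm, Finset.sum_comm, Finset.mul_sum]
    apply Finset.sum_le_sum; intro i _
    rw [hv]
    simp only [Finset.sum_apply, Pi.smul_apply, smul_eq_mul]
    calc _ ≤ (∑ k, ‖star (c k) * ((E k)ᴴ *ᵥ v) i‖) ^ 2 := by
          gcongr; exact norm_sum_le _ _
      _ = (∑ k, ‖c k‖ * ‖((E k)ᴴ *ᵥ v) i‖) ^ 2 := by simp only [norm_mul, norm_star]
      _ ≤ _ := Finset.sum_mul_sq_le_sq_mul_sq _ _ _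
  refine ⟨∑ k, E k * (E k)ᴴ, hσM, hσP, ?_, ?_, ?_⟩
  · intro a ha
    have h1 : ∀ k, a * E k = ∑ l, ((E l)ᴴ * (a * E k)).trace • E l :=
      fun k => hErep _ (hideal a ha _ (hEJ k))
    have h2 : ∀ l, aᴴ * E l = ∑ k, ((E k)ᴴ * (aᴴ * E l)).trace • E k :=
      fun l => hErep _ (hideal _ (hstar a ha) _ (hEJ l))
    have h3 : ∀ l, (E l)ᴴ * a = ∑ k, ((E l)ᴴ * (a * E k)).trace • (E k)ᴴ := by
      intro l
      have := congrArg conjTranspose (h2 l)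
      rw [conjTranspose_mul, conjTranspose_conjTranspose, conjTranspose_sum] at this
      rw [this]
      apply Finset.sum_congr rfl; intro k _
      rw [conjTranspose_smul, ← trace_conjTranspose]
      simp only [conjTranspose_mul, conjTranspose_conjTranspose, mul_assoc]
    rw [Finset.mul_sum, Finset.sum_mul]
    calc _ = ∑ k, ∑ l, ((E l)ᴴ * (a * E k)).trace • (E l * (E k)ᴴ) := by
          apply Finset.sum_congr rfl; intro k _
          rw [← mul_assoc]
          nth_rw 1 [h1 k]
          rw [Finset.sum_mul]
          simp only [smul_mul_assoc]
      _ = ∑ l, ∑ k, ((E l)ᴴ * (a * E k)).trace • (E l * (E k)ᴴ) := Finset.sum_comm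
      _ = _ := by
          apply Finset.sum_congr rfl; intro l _
          rw [mul_assoc, h3 l, Finset.mul_sum]
          simp only [Matrix.mul_smul]
  · rw [trace_sum]
    have : ∀ k, (E k * (E k)ᴴ).trace = 1 := fun k => by rw [trace_mul_comm, hE1]
    simp [this]
  · intro τ hτ hτP
    set σ := ∑ k, E k * (E k)ᴴ with hσ
    let D : Set (Matrix m m ℂ) := {ω | ω ∈ M ∧ ω.PosSemidef ∧ (τ - ω).PosSemidef ∧
      ((ω.trace.re : ℂ) • σ - ω).PosSemidef}
    have hDcl : IsClosed D := by
      have h1 : IsClosed (M : Set (Matrix m m ℂ)) := M.closed_of_finiteDimensional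
      refine h1.inter (isClosed_psd.inter (IsClosed.inter ?_ ?_))
      · exact isClosed_psd.preimage (f := fun ω : Matrix m m ℂ => τ - ω) (by fun_prop)
      · refine isClosed_psd.preimage (f := fun ω : Matrix m m ℂ => (ω.trace.re : ℂ) • σ - ω) ?_
        have : Continuous fun ω : Matrix m m ℂ => (ω.trace.re : ℂ) :=
          Complex.continuous_ofReal.comp (Complex.continuous_re.comp
            (Continuous.matrix_trace continuous_id))
        fun_prop
    have hDc : IsCompact D := by
      have hK : IsCompact (Set.univ.pi fun _ : m => Set.univ.pi fun _ : m =>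
          Metric.closedBall (0:ℂ) (τ.trace.re)) :=
        isCompact_univ_pi fun _ => isCompact_univ_pi fun _ => isCompact_closedBall _ _
      refine IsCompact.of_isClosed_subset hK hDcl ?_
      rintro ω ⟨-, h1, h2, -⟩ i - j -
      rw [mem_closedBall_zero_iff]
      refine (psd_entry h1 i j).trans ?_
      have := (Complex.le_def.mp h2.trace_nonneg).1
      rw [trace_sub] at this
      simp at this; exact this
    have hD0 : (0 : Matrix m m ℂ) ∈ D :=
      ⟨M.zero_mem, PosSemidef.zero, by simpa using hτP, by simpa using PosSemidef.zero⟩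
    obtain ⟨ω, ⟨hω1, hω2, hω3, hω4⟩, hmax⟩ := hDc.exists_isMaxOn ⟨0, hD0⟩
      (f := fun ω : Matrix m m ℂ => ω.trace.re)
      (Complex.continuous_re.comp (Continuous.matrix_trace continuous_id)).continuousOn
    suffices h : τ - ω = 0 by
      rw [sub_eq_zero] at h; rw [h]; exact hω4
    apply hfaith _ (M.sub_mem hτ hω1)
    intro s hs
    by_contra hne
    set x := (τ - ω) * s with hx
    have hxJ : x ∈ J := hideal _ (M.sub_mem hτ hω1) _ hs
    have hxM := hJM hxJ
    have hxP := posSemidef_self_mul_conjTranspose x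
    have hxpos : 0 < (x * xᴴ).trace.re := by
      have h0 := (Complex.le_def.mp hxP.trace_nonneg).1
      refine lt_of_le_of_ne h0 fun h => hne ?_
      have : (x * xᴴ).trace = 0 := by rw [← la_psd_trace_re hxP, ← h]; simp
      exact trace_mul_conjTranspose_self_eq_zero_iff.mp this
    obtain ⟨B, hB⟩ := la_sq hω3
    -- xxᴴ ≤ C (τ - ω)
    obtain ⟨C, hC0, hC⟩ : ∃ C : ℝ, 0 < C ∧ ((C : ℂ) • (τ - ω) - x * xᴴ).PosSemidef := by
      have hG := posSemidef_self_mul_conjTranspose (B * s)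
      have hG2 := la_le_trace hG
      have hG0 : (0:ℝ) ≤ (B * s * (B * s)ᴴ).trace.re := (Complex.le_def.mp hG.trace_nonneg).1
      have hxH : xᴴ = sᴴ * (τ - ω) := by rw [hx, conjTranspose_mul, hω3.1.eq]
      refine ⟨(B * s * (B * s)ᴴ).trace.re + 1, by linarith, ?_⟩
      have h1 := hG2.conjTranspose_mul_mul_same B
      have h2 : Bᴴ * (((B * s * (B * s)ᴴ).trace.re : ℂ) • (1 : Matrix m m ℂ) - B * s * (B * s)ᴴ) * B
        = ((B * s * (B * s)ᴴ).trace.re : ℂ) • (τ - ω) - x * xᴴ := by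
        generalize (((B * s * (B * s)ᴴ).trace.re : ℝ) : ℂ) = c
        rw [mul_sub, sub_mul, Matrix.mul_smul, mul_one, smul_mul_assoc, hxH, hx, hB,
          conjTranspose_mul]
        simp only [mul_assoc]
      rw [h2] at h1
      have h3 := h1.add hω3
      convert h3 using 1
      push_cast
      rw [add_smul, one_smul]; abel
    have hmem : ω + ((C⁻¹ : ℝ) : ℂ) • (x * xᴴ) ∈ D := by
      refine ⟨M.add_mem hω1 (M.smul_mem _ (hmul _ hxM _ (hstar _ hxM))),
        hω2.add (psd_smul hxP (inv_nonneg.mpr hC0.le)), ?_, ?_⟩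
      · have := psd_smul hC (inv_nonneg.mpr hC0.le)
        convert this using 1
        rw [smul_sub, smul_smul, ← Complex.ofReal_mul, inv_mul_cancel₀ hC0.ne', Complex.ofReal_one,
          one_smul]
        abel
      · have := hω4.add (psd_smul (hdom x hxJ) (inv_nonneg.mpr hC0.le))
        convert this using 1
        rw [smul_sub, smul_smul, ← Complex.ofReal_mul, trace_add, trace_smul, smul_eq_mul,
          Complex.add_re, Complex.re_ofReal_mul, Complex.ofReal_add, add_smul]
        abel
    have := hmax hmem
    simp only [Set.mem_setOf_eq, trace_add, trace_smul, smul_eq_mul, Complex.add_re,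
      Complex.re_ofReal_mul] at this
    have : 0 < C⁻¹ * (x * xᴴ).trace.re := by positivity
    linarith

end LC

end Part3

section Part4
open Matrix

section TF
set_option linter.unusedSectionVars false
variable {κ δ : Type*} [Fintype κ] [DecidableEq κ] [Fintype δ] [DecidableEq δ]

lemma prod_sum_pi {κ β R : Type*} [Fintype κ] [DecidableEq κ] [Fintype β] [CommSemiring R]
    (f : κ → β → R) : ∏ k, ∑ b, f k b = ∑ p : κ → β, ∏ k, f k (p k) := by
  rw [Finset.prod_univ_sum, Fintype.piFinset_univ]

lemma tf_apply (A : κ → Matrix δ δ ℂ) (i j : κ → δ) : tensorFam A i j = ∏ k, A k (i k) (j k) := rfl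

lemma tf_mul (A B : κ → Matrix δ δ ℂ) :
    tensorFam A * tensorFam B = tensorFam fun k => A k * B k := by
  ext i j
  simp only [mul_apply, tf_apply, ← Finset.prod_mul_distrib]
  rw [prod_sum_pi (fun k b => A k (i k) b * B k b (j k))]

lemma tf_conj (A : κ → Matrix δ δ ℂ) : (tensorFam A)ᴴ = tensorFam fun k => (A k)ᴴ := by
  ext i j
  simp [tf_apply, conjTranspose_apply]

lemma tf_diag (a : κ → δ → ℂ) : tensorFam (fun k => diagonal (a k)) =
    diagonal fun i : κ → δ => ∏ k, a k (i k) := by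
  ext i j
  rw [tf_apply]
  by_cases h : i = j
  · subst h; simp
  · rw [diagonal_apply_ne _ h]
    obtain ⟨k, hk⟩ := Function.ne_iff.mp h
    exact Finset.prod_eq_zero (Finset.mem_univ k) (diagonal_apply_ne _ hk)

lemma tf_one : tensorFam (fun _ : κ => (1 : Matrix δ δ ℂ)) = 1 := by
  simp_rw [← diagonal_one]
  rw [tf_diag]; simp

lemma tf_psd {A : κ → Matrix δ δ ℂ} (hA : ∀ k, (A k).PosSemidef) : (tensorFam A).PosSemidef := by
  choose B hB using fun k => la_sq (hA k)
  have : tensorFam A = (tensorFam B)ᴴ * tensorFam B := by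
    rw [tf_conj, tf_mul]; congr 1; funext k; exact hB k
  rw [this]; exact posSemidef_conjTranspose_mul_self _

lemma tf_trace (A : κ → Matrix δ δ ℂ) : (tensorFam A).trace = ∏ k, (A k).trace := by
  simp only [trace, diag, tf_apply]
  rw [prod_sum_pi (fun k b => A k b b)]

lemma tf_density {A : κ → Matrix δ δ ℂ} (hA : ∀ k, IsDensity (A k)) : IsDensity (tensorFam A) :=
  ⟨tf_psd fun k => (hA k).1, by rw [tf_trace]; simp [fun k => (hA k).2]⟩

lemma tf_smul (c : κ → ℂ) (A : κ → Matrix δ δ ℂ) :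
    tensorFam (fun k => c k • A k) = (∏ k, c k) • tensorFam A := by
  ext i j
  simp [tf_apply, Finset.prod_mul_distrib]

/-- multilinear expansion -/
lemma tf_sum {β : Type*} [Fintype β] (A : κ → β → Matrix δ δ ℂ) :
    tensorFam (fun k => ∑ b, A k b) = ∑ p : κ → β, tensorFam fun k => A k (p k) := by
  ext i j
  simp only [tf_apply, Matrix.sum_apply]
  rw [prod_sum_pi (fun k b => A k b (i k) (j k))]

lemma tf_mono {A B : κ → Matrix δ δ ℂ} (hA : ∀ k, (A k).PosSemidef)
    (hAB : ∀ k, (B k - A k).PosSemidef) : (tensorFam B - tensorFam A).PosSemidef := by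
  let C : κ → Bool → Matrix δ δ ℂ := fun k b => if b then A k else B k - A k
  have h1 : tensorFam B = ∑ p : κ → Bool, tensorFam fun k => C k (p k) := by
    rw [← tf_sum]; congr 1; funext k; simp [C]
  have h2 : tensorFam A = tensorFam fun k => C k ((fun _ => true : κ → Bool) k) := by
    simp [C]
  rw [h1, h2, ← Finset.sum_erase_eq_sub (Finset.mem_univ _)]
  apply posSemidef_sum
  intro p _
  apply tf_psd
  intro k
  simp only [C]; split_ifs; exacts [hA k, hAB k]

lemma spow_mul (p : ℝ) {u v : ℝ} (hu : 0 ≤ u) (hv : 0 ≤ v) :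
    spow p (u * v) = spow p u * spow p v := by
  unfold spow
  rcases hu.eq_or_lt with rfl | hu
  · simp
  rcases hv.eq_or_lt with rfl | hv
  · simp
  have := mul_pos hu hv
  rw [if_neg (by linarith), if_neg (by linarith), if_neg (by linarith), Real.mul_rpow hu.le hv.le]

lemma spow_prod (p : ℝ) (u : κ → ℝ) (hu : ∀ k, 0 ≤ u k) (S : Finset κ) :
    spow p (∏ k ∈ S, u k) = ∏ k ∈ S, spow p (u k) := by
  induction S using Finset.induction_on with
  | empty => simp [spow]
  | insert a S ha ih =>
    rw [Finset.prod_insert ha, Finset.prod_insert ha, spow_mul _ (hu a)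
      (Finset.prod_nonneg fun k _ => hu k), ih]

lemma tf_mpow {A : κ → Matrix δ δ ℂ} (hA : ∀ k, (A k).PosSemidef) (p : ℝ) :
    mpow (tensorFam A) p = tensorFam fun k => mpow (A k) p := by
  choose U a hU ha hAU using fun k => la_psd_decomp (hA k)
  have h1 : tensorFam A = tensorFam U * diagonal (fun i : κ → δ => ((∏ k, a k (i k) : ℝ) : ℂ)) *
      (tensorFam U)ᴴ := by
    push_cast
    rw [← tf_diag (fun k i => (a k i : ℂ)), tf_conj, tf_mul, tf_mul]
    congr 1; funext k; exact hAU k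
  have h2 : (tensorFam U)ᴴ * tensorFam U = 1 := by
    rw [tf_conj, tf_mul]; simp_rw [hU]; exact tf_one
  rw [mpow_eq p h2 h1]
  have h3 : ∀ k, mpow (A k) p = U k * diagonal (fun i => (spow p (a k i) : ℂ)) * (U k)ᴴ :=
    fun k => mpow_eq p (hU k) (hAU k)
  simp_rw [h3]
  rw [← tf_mul, ← tf_mul, tf_diag, ← tf_conj]
  congr 3
  funext i
  rw [spow_prod _ _ fun k => ha k _]; push_cast; rfl

lemma tf_perm (A : κ → Matrix δ δ ℂ) (π : Equiv.Perm κ) (i j : κ → δ) :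
    tensorFam A (i ∘ π) (j ∘ π) = tensorFam (A ∘ π.symm) i j := by
  rw [tf_apply, tf_apply, ← Equiv.prod_comp π (fun k => (A ∘ π.symm) k (i k) (j k))]
  simp

end TF

end Part4

section Part5
open Matrix

section UC
set_option linter.unusedSectionVars false
variable {κ Y : Type*} [Fintype κ] [DecidableEq κ] [Fintype Y] [DecidableEq Y] {d : ℕ}

/-- matrices commuting with all colour-preserving permutations -/
def Mc (c : κ → Y) (d : ℕ) : Submodule ℂ (Matrix (κ → Fin d) (κ → Fin d) ℂ) where
  carrier := {s | ∀ π : Equiv.Perm κ, c ∘ π = c → ∀ i j, s (i ∘ π) (j ∘ π) = s i j}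
  add_mem' := by
    intro a b ha hb π hπ i j
    rw [Matrix.add_apply, Matrix.add_apply, ha π hπ, hb π hπ]
  zero_mem' := by intro π hπ i j; rfl
  smul_mem' := by
    intro z a ha π hπ i j
    rw [Matrix.smul_apply, Matrix.smul_apply, ha π hπ]

lemma sum_perm {β R : Type*} [Fintype β] [AddCommMonoid R] (π : Equiv.Perm κ) (f : (κ → β) → R) :
    ∑ i : κ → β, f (i ∘ π) = ∑ i, f i :=
  Equiv.sum_comp (Equiv.arrowCongr π.symm (Equiv.refl β)) f

lemma Mc_mul (c : κ → Y) (a : Matrix (κ → Fin d) (κ → Fin d) ℂ) (ha : a ∈ Mc c d)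
    (b : Matrix (κ → Fin d) (κ → Fin d) ℂ) (hb : b ∈ Mc c d) : a * b ∈ Mc c d := by
  intro π hπ i j
  rw [mul_apply, mul_apply, ← sum_perm π]
  exact Finset.sum_congr rfl fun l _ => by rw [ha π hπ, hb π hπ]

lemma Mc_star (c : κ → Y) (a : Matrix (κ → Fin d) (κ → Fin d) ℂ) (ha : a ∈ Mc c d) :
    aᴴ ∈ Mc c d := by
  intro π hπ i j
  rw [conjTranspose_apply, conjTranspose_apply, ha π hπ]

lemma Mc_tf (c : κ → Y) (A : Y → Matrix (Fin d) (Fin d) ℂ) :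
    tensorFam (fun k => A (c k)) ∈ Mc c d := by
  intro π hπ i j
  rw [tf_apply, tf_apply, ← Equiv.prod_comp π (fun k => A (c k) (i k) (j k))]
  refine Finset.prod_congr rfl fun k _ => ?_
  have := congrFun hπ k
  simp only [Function.comp] at this ⊢
  rw [this]

lemma Mc_one (c : κ → Y) : (1 : Matrix (κ → Fin d) (κ → Fin d) ℂ) ∈ Mc c d := by
  have := Mc_tf c (fun _ => (1 : Matrix (Fin d) (Fin d) ℂ))
  rwa [tf_one] at this

def LowUni (L : Matrix (Fin d) (Fin d) ℂ) : Prop := (∀ i, L i i = 1) ∧ ∀ i j, i < j → L i j = 0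

def Jc (c : κ → Y) (d : ℕ) : Submodule ℂ (Matrix (κ → Fin d) (κ → Fin d) ℂ) where
  carrier := {s | s ∈ Mc c d ∧ ∀ L : Y → Matrix (Fin d) (Fin d) ℂ, (∀ y, LowUni (L y)) →
    s * tensorFam (fun k => L (c k)) = s}
  add_mem' := by
    rintro a b ⟨ha, ha'⟩ ⟨hb, hb'⟩
    refine ⟨(Mc c d).add_mem ha hb, fun L hL => ?_⟩
    rw [add_mul, ha' L hL, hb' L hL]
  zero_mem' := ⟨(Mc c d).zero_mem, fun L hL => by rw [zero_mul]⟩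
  smul_mem' := by
    rintro z a ⟨ha, ha'⟩
    refine ⟨(Mc c d).smul_mem z ha, fun L hL => ?_⟩
    rw [smul_mul_assoc, ha' L hL]

lemma Jc_le (c : κ → Y) : Jc c d ≤ Mc c d := fun _ h => h.1

lemma Jc_ideal (c : κ → Y) (a : Matrix (κ → Fin d) (κ → Fin d) ℂ) (ha : a ∈ Mc c d)
    (s : Matrix (κ → Fin d) (κ → Fin d) ℂ) (hs : s ∈ Jc c d) : a * s ∈ Jc c d :=
  ⟨Mc_mul c a ha s hs.1, fun L hL => by rw [mul_assoc, hs.2 L hL]⟩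

lemma Jc_faith (c : κ → Y) (a : Matrix (κ → Fin d) (κ → Fin d) ℂ) (ha : a ∈ Mc c d)
    (h0 : ∀ s ∈ Jc c d, a * s = 0) : a = 0 := by
  by_contra hne
  let w : (κ → Fin d) → ℕ := fun i => ∑ k, (i k : ℕ)
  let p : ℕ → Prop := fun h => ∃ s ∈ Mc c d, aᴴ * s ≠ 0 ∧ ∀ l j, h ≤ w j → (aᴴ * s) l j = 0
  have hp : ∃ h, p h := by
    refine ⟨(∑ k : κ, d) + 1, 1, Mc_one c, ?_, ?_⟩
    · rw [mul_one]; exact fun h => hne (conjTranspose_eq_zero.mp h)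
    · intro l j hj
      have : w j ≤ ∑ k : κ, d := Finset.sum_le_sum fun k _ => (j k).2.le
      omega
  classical
  obtain ⟨s, hs, hb, hcol⟩ := Nat.find_spec hp
  have hmin := fun m => Nat.find_min (m := m) hp
  generalize Nat.find hp = h at hcol hmin
  have hbJ : aᴴ * s ∈ Jc c d := by
    refine ⟨Mc_mul c _ (Mc_star c a ha) s hs, fun L hL => ?_⟩
    by_contra hbne
    have hh : 0 < h := by
      rcases Nat.eq_zero_or_pos h with rfl | hh
      · exact absurd (by ext l j; exact hcol l j (Nat.zero_le _)) hb
      · exact hh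
    apply hmin (h - 1) (by omega)
    have heq : aᴴ * (s * tensorFam (fun k => L (c k)) - s) =
      aᴴ * s * (tensorFam (fun k => L (c k)) - 1) := by
      rw [mul_sub, mul_sub, mul_one, mul_assoc]
    refine ⟨s * tensorFam (fun k => L (c k)) - s,
      (Mc c d).sub_mem (Mc_mul c s hs _ (Mc_tf c L)) hs, ?_, ?_⟩
    · rw [mul_sub, ← mul_assoc]; exact sub_ne_zero.mpr hbne
    · intro l j hj
      rw [heq, mul_apply]
      apply Finset.sum_eq_zero
      intro i _
      by_cases hij : (tensorFam (fun k => L (c k)) - 1) i j = 0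
      · rw [hij, mul_zero]
      · have hne : i ≠ j := by
          rintro rfl
          apply hij
          rw [Matrix.sub_apply, tf_apply, one_apply_eq]
          simp [fun k => (hL (c k)).1]
        have hle : ∀ k, j k ≤ i k := by
          intro k
          by_contra hlt
          push Not at hlt
          apply hij
          rw [Matrix.sub_apply, tf_apply, one_apply_ne hne, sub_zero]
          exact Finset.prod_eq_zero (Finset.mem_univ k) ((hL (c k)).2 _ _ hlt)
        have hlt : w j < w i := by
          obtain ⟨k, hk⟩ := Function.ne_iff.mp hne
          exact Finset.sum_lt_sum (fun k _ => hle k)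
            ⟨k, Finset.mem_univ k, lt_of_le_of_ne (hle k) (fun e => hk (Fin.ext e.symm))⟩
        rw [hcol l i (by omega), zero_mul]
  have h1 := h0 _ hbJ
  apply hb
  have : (aᴴ * s)ᴴ * (aᴴ * s) = 0 := by
    rw [conjTranspose_mul, conjTranspose_conjTranspose, mul_assoc, h1, mul_zero]
  exact conjTranspose_mul_self_eq_zero.mp this

end UC

end Part5

section Part6
open Matrix

section UD
set_option linter.unusedSectionVars false
variable {κ Y : Type*} [Fintype κ] [DecidableEq κ] [Fintype Y] [DecidableEq Y] {d : ℕ}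

lemma perm_of_fibers {Z : Type*} [DecidableEq Z] (f g : κ → Z)
    (h : ∀ z, (Finset.univ.filter fun k => f k = z).card = (Finset.univ.filter fun k => g k = z).card) :
    ∃ π : Equiv.Perm κ, g ∘ π = f := by
  have : ∀ z, Nonempty ({a // f a = z} ≃ {b // g b = z}) := by
    intro z
    apply Fintype.card_eq.mp
    rw [Fintype.card_subtype, Fintype.card_subtype, h z]
  let e := fun z => (this z).some
  exact ⟨Equiv.ofFiberEquiv e, funext fun k => Equiv.ofFiberEquiv_map e k⟩

/-- the trace functional -/
def fS (c : κ → Y) (s : Matrix (κ → Fin d) (κ → Fin d) ℂ) (A : Y → Matrix (Fin d) (Fin d) ℂ) : ℂ :=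
  ∑ i, ∑ j, s i j * ∏ k, A (c k) (j k) (i k)

lemma fS_eq (c : κ → Y) (s : Matrix (κ → Fin d) (κ → Fin d) ℂ)
    (A : Y → Matrix (Fin d) (Fin d) ℂ) :
    fS c s A = (s * tensorFam (fun k => A (c k))).trace := by
  simp only [trace, diag, mul_apply, tf_apply, fS]

lemma fS_low (c : κ → Y) (s : Matrix (κ → Fin d) (κ → Fin d) ℂ) (hs : s ∈ Jc c d)
    (A L : Y → Matrix (Fin d) (Fin d) ℂ) (hL : ∀ y, LowUni (L y)) :
    fS c s (fun y => L y * A y) = fS c s A := by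
  rw [fS_eq, fS_eq, ← tf_mul (fun k => L (c k)) (fun k => A (c k)), ← mul_assoc, hs.2 L hL]

lemma fS_zero (c : κ → Y) (s : Matrix (κ → Fin d) (κ → Fin d) ℂ) (hs : s ∈ Jc c d)
    (h0 : ∀ i j : κ → Fin d, (∀ k, j k ≤ i k) → s i j = 0) (r : ℕ) :
    ∀ A : Y → Matrix (Fin d) (Fin d) ℂ,
      (∀ y (p q : Fin d), q < p → (q : ℕ) + r < d → A y p q = 0) → fS c s A = 0 := by
  induction r with
  | zero =>
    intro A hA
    apply Finset.sum_eq_zero; intro i _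
    apply Finset.sum_eq_zero; intro j _
    by_cases h : ∀ k, j k ≤ i k
    · rw [h0 i j h, zero_mul]
    · push Not at h
      obtain ⟨k, hk⟩ := h
      rw [Finset.prod_eq_zero (Finset.mem_univ k) (hA _ _ _ hk (i k).2), mul_zero]
  | succ r ih =>
    intro A hA
    by_cases hr : d < r + 1
    · exact ih A fun y p q hqp hq => hA y p q hqp (by omega)
    let m : Fin d := ⟨d - (r + 1), by omega⟩
    have key : ∀ A : Y → Matrix (Fin d) (Fin d) ℂ,
      (∀ y (p q : Fin d), q < p → (q : ℕ) + (r + 1) < d → A y p q = 0) → (∀ y, A y m m ≠ 0) →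
        fS c s A = 0 := by
      intro A hA hm
      let L : Y → Matrix (Fin d) (Fin d) ℂ := fun y => Matrix.of fun p q =>
        (if p = q then 1 else 0) - if m < p ∧ q = m then A y p m / A y m m else 0
      have hL : ∀ y, LowUni (L y) := by
        intro y
        constructor
        · intro i
          simp only [L, Matrix.of_apply]
          rw [if_pos trivial, if_neg (fun h => absurd h.2 h.1.ne'), sub_zero]
        · intro i j hij
          simp only [L, Matrix.of_apply]
          rw [if_neg hij.ne, if_neg (by rintro ⟨h1, rfl⟩; exact absurd h1 hij.not_gt)]; simp
      rw [← fS_low c s hs A L hL]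
      apply ih
      intro y p q hqp hq
      have hent : (L y * A y) p q = A y p q - if m < p then A y p m / A y m m * A y m q else 0 := by
        simp only [mul_apply, L, Matrix.of_apply, sub_mul, Finset.sum_sub_distrib, ite_mul, one_mul,
          zero_mul, Finset.sum_ite_eq, Finset.mem_univ, if_true]
        congr 1
        by_cases hmp : m < p
        · simp [hmp]
        · simp [hmp]
      rw [hent]
      by_cases hqm : q = m
      · subst hqm
        rw [if_pos hqp, div_mul_cancel₀ _ (hm y), sub_self]
      · have hq2 : (q : ℕ) < d - (r + 1) := by
          have h1 : (q : ℕ) ≠ d - (r + 1) := fun h => hqm (Fin.ext h)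
          omega
        have hqm' : q < m := hq2
        rw [hA y p q hqp (by omega), hA y m q hqm' (by omega)]
        simp
    let g : ℂ → ℂ := fun z => fS c s fun y => A y + Matrix.single m m z
    have hg : Continuous g := by
      simp only [g, fS, Matrix.add_apply, Matrix.single_apply]
      refine continuous_finsetSum _ fun i _ => continuous_finsetSum _ fun j _ =>
        continuous_const.mul (continuous_finsetProd _ fun k _ => continuous_const.add ?_)
      split_ifs
      · exact continuous_id
      · exact continuous_const
    let Sb : Set ℂ := Set.range fun y : Y => - A y m m
    have hd : Dense Sbᶜ := Set.Countable.dense_compl ℝ (Set.finite_range _).countable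
    have hgz : g = fun _ => 0 := by
      refine Continuous.ext_on hd hg continuous_const ?_
      intro z hz
      apply key
      · intro y p q hqp hq
        rw [Matrix.add_apply, hA y p q hqp hq, Matrix.single_apply, if_neg, add_zero]
        rintro ⟨rfl, rfl⟩; exact lt_irrefl _ hqp
      · intro y h
        apply hz
        refine ⟨y, ?_⟩
        rw [Matrix.add_apply, Matrix.single_apply, if_pos ⟨rfl, rfl⟩] at h
        exact (eq_neg_of_add_eq_zero_right h).symm
    have := congrFun hgz 0
    simpa [g] using this

lemma zero_of_fS (c : κ → Y) (s : Matrix (κ → Fin d) (κ → Fin d) ℂ) (hs : s ∈ Mc c d)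
    (h0 : ∀ A, fS c s A = 0) : s = 0 := by
  let z : (κ → Fin d) → (κ → Fin d) → κ → Y × Fin d × Fin d := fun i j k => (c k, j k, i k)
  let μ : (κ → Fin d) → (κ → Fin d) → (Y × Fin d × Fin d →₀ ℕ) :=
    fun i j => ∑ k, Finsupp.single (z i j k) 1
  let F : MvPolynomial (Y × Fin d × Fin d) ℂ := ∑ i, ∑ j, MvPolynomial.monomial (μ i j) (s i j)
  have hF : F = 0 := by
    apply MvPolynomial.funext
    intro x
    rw [map_zero, ← h0 fun y => Matrix.of fun p q => x (y, p, q)]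
    simp only [F, map_sum, fS]
    refine Finset.sum_congr rfl fun i _ => Finset.sum_congr rfl fun j _ => ?_
    have : MvPolynomial.monomial (μ i j) (s i j) =
        MvPolynomial.C (s i j) * ∏ k, MvPolynomial.X (z i j k) := by
      simp only [μ, MvPolynomial.X]
      rw [← MvPolynomial.monomial_sum_one, MvPolynomial.C_mul_monomial, mul_one]
    rw [this]
    simp [z]
  have hμ : ∀ i j i' j', μ i j = μ i' j' → s i j = s i' j' := by
    intro i j i' j' h
    obtain ⟨π, hπ⟩ := perm_of_fibers (z i j) (z i' j') (by
      intro w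
      have := DFunLike.congr_fun h w
      simp only [μ, Finsupp.finsetSum_apply, Finsupp.single_apply] at this
      rw [Finset.card_filter, Finset.card_filter]
      exact this)
    have h1 : c ∘ π = c := funext fun k => congrArg Prod.fst (congrFun hπ k)
    have h2 : j' ∘ π = j := funext fun k => congrArg (fun w => w.2.1) (congrFun hπ k)
    have h3 : i' ∘ π = i := funext fun k => congrArg (fun w => w.2.2) (congrFun hπ k)
    rw [← h2, ← h3, hs π h1]
  ext i j
  have hc : F.coeff (μ i j) = 0 := by rw [hF]; simp
  simp only [F, MvPolynomial.coeff_sum, MvPolynomial.coeff_monomial] at hc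
  have : ∑ i', ∑ j', (if μ i' j' = μ i j then s i' j' else 0) =
      (∑ i', ∑ j', if μ i' j' = μ i j then 1 else 0 : ℕ) * s i j := by
    push_cast
    rw [Finset.sum_mul]
    refine Finset.sum_congr rfl fun i' _ => ?_
    rw [Finset.sum_mul]
    refine Finset.sum_congr rfl fun j' _ => ?_
    split_ifs with h
    · rw [one_mul, hμ _ _ _ _ h]
    · rw [zero_mul]
  rw [this] at hc
  rcases mul_eq_zero.mp hc with h | h
  · exfalso
    rw [Nat.cast_eq_zero, Finset.sum_eq_zero_iff] at h
    have := h i (Finset.mem_univ i)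
    rw [Finset.sum_eq_zero_iff] at this
    have := this j (Finset.mem_univ j)
    simp at this
  · exact h

abbrev Tri (d : ℕ) : Type := {p : Fin d × Fin d // p.1 ≤ p.2}

/-- number of multisets of size `m` from the triangular index set -/
def NN (d m : ℕ) : ℕ := (Finset.piAntidiag (Finset.univ : Finset (Tri d)) m).card

def fib (c : κ → Y) (y : Y) : ℕ := (Finset.univ.filter fun k => c k = y).card

lemma Jc_finrank (c : κ → Y) : Module.finrank ℂ (Jc c d) ≤ ∏ y, NN d (fib c y) := by
  let Trip := {ij : (κ → Fin d) × (κ → Fin d) // ∀ k, ij.2 k ≤ ij.1 k}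
  let z : Trip → κ → Y × Tri d := fun ij k => (c k, ⟨(ij.1.2 k, ij.1.1 k), ij.2 k⟩)
  let cnt : Trip → Y → Tri d → ℕ := fun ij y p => (Finset.univ.filter fun k => z ij k = (y, p)).card
  let I : Finset (Y → Tri d → ℕ) := Finset.univ.image cnt
  have hrep : ∀ m : I, ∃ ij : Trip, cnt ij = m.1 := fun m => by
    obtain ⟨ij, -, h⟩ := Finset.mem_image.mp m.2
    exact ⟨ij, h⟩
  choose rep hrep using hrep
  let Φ : Jc c d →ₗ[ℂ] (I → ℂ) :=
    { toFun := fun s m => s.1 (rep m).1.1 (rep m).1.2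
      map_add' := fun _ _ => rfl
      map_smul' := fun _ _ => rfl }
  have hinj : Function.Injective Φ := by
    rw [injective_iff_map_eq_zero]
    rintro ⟨s, hs⟩ h
    have h0 : ∀ i j : κ → Fin d, (∀ k, j k ≤ i k) → s i j = 0 := by
      intro i j hij
      let t : Trip := ⟨(i, j), hij⟩
      let m : I := ⟨cnt t, Finset.mem_image_of_mem _ (Finset.mem_univ _)⟩
      obtain ⟨π, hπ⟩ := perm_of_fibers (z (rep m)) (z t) (by
        rintro ⟨y, p⟩
        exact congrFun (congrFun (hrep m) y) p)
      have h1 : c ∘ π = c := funext fun k => congrArg Prod.fst (congrFun hπ k)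
      have h2 : j ∘ π = (rep m).1.2 := funext fun k => congrArg (fun w => w.2.1.1) (congrFun hπ k)
      have h3 : i ∘ π = (rep m).1.1 := funext fun k => congrArg (fun w => w.2.1.2) (congrFun hπ k)
      have := congrFun h m
      change s (rep m).1.1 (rep m).1.2 = 0 at this
      rw [← h2, ← h3, hs.1 π h1] at this
      exact this
    have : s = 0 := zero_of_fS c s hs.1 fun A => fS_zero c s hs h0 d A fun y p q _ h => by omega
    exact Subtype.ext this
  calc Module.finrank ℂ (Jc c d) ≤ Module.finrank ℂ (I → ℂ) :=
        LinearMap.finrank_le_finrank_of_injective hinj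
    _ = I.card := by rw [Module.finrank_fintype_fun_eq_card, Fintype.card_coe]
    _ ≤ (Fintype.piFinset fun y => Finset.piAntidiag (Finset.univ : Finset (Tri d)) (fib c y)).card := by
        apply Finset.card_le_card
        intro f hf
        obtain ⟨ij, -, rfl⟩ := Finset.mem_image.mp hf
        rw [Fintype.mem_piFinset]
        intro y
        rw [Finset.mem_piAntidiag]
        refine ⟨?_, fun _ _ => Finset.mem_univ _⟩
        simp only [cnt, fib]
        rw [← Finset.card_biUnion]
        · congr 1
          ext k
          simp [z]
        · intro p _ q _ hpq
          rw [Function.onFun, Finset.disjoint_left]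
          intro k hk hk'
          simp only [Finset.mem_filter] at hk hk'
          exact hpq (congrArg Prod.snd (hk.2.symm.trans hk'.2))
    _ = _ := by rw [Fintype.card_piFinset]; rfl

/-- the universal operator -/
lemma univ_color (c : κ → Y) (hd : 0 < d) : ∃ σ ∈ Mc c d, σ.PosDef ∧
    (∀ a ∈ Mc c d, a * σ = σ * a) ∧ σ.trace.re ≤ ∏ y, (NN d (fib c y) : ℝ) ∧
    ∀ τ ∈ Mc c d, IsDensity τ → (σ - τ).PosSemidef := by
  obtain ⟨σ, h1, h2, h3, h4, h5⟩ := univ_op (Mc c d) (Jc c d) (Mc_mul c) (Mc_star c) (Jc_le c)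
    (Jc_ideal c) (Jc_faith c)
  refine ⟨σ, h1, ?_, h3, ?_, ?_⟩
  · have h6 := h5 1 (Mc_one c) PosSemidef.one
    have : Nonempty (Fin d) := ⟨⟨0, hd⟩⟩
    have hN : 0 < (Fintype.card (κ → Fin d) : ℝ) := by exact_mod_cast Fintype.card_pos
    have h7 : ((1 : Matrix (κ → Fin d) (κ → Fin d) ℂ).trace.re : ℝ) = Fintype.card (κ → Fin d) := by
      rw [trace_one, Complex.natCast_re]
    rw [h7] at h6
    have h8 := psd_smul h6 (inv_nonneg.mpr hN.le)
    rw [smul_sub, smul_smul, ← Complex.ofReal_mul, inv_mul_cancel₀ hN.ne', Complex.ofReal_one,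
      one_smul] at h8
    have h9 : ((((Fintype.card (κ → Fin d) : ℝ)⁻¹ : ℝ) : ℂ) •
      (1 : Matrix (κ → Fin d) (κ → Fin d) ℂ)).PosDef :=
      PosDef.one.smul (by rw [Complex.zero_lt_real]; exact inv_pos.mpr hN)
    have := h9.add_posSemidef h8
    convert this using 1
    abel
  · rw [h4]; exact_mod_cast Jc_finrank c
  · intro τ hτ hτd
    have := h5 τ hτ hτd.1
    rwa [hτd.2, Complex.one_re, Complex.ofReal_one, one_smul] at this

end UD

end Part6

section Part7
open Matrix

section CB
set_option linter.unusedSectionVars false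

lemma card_pia {S : Type*} [Fintype S] [DecidableEq S] (n : ℕ) :
    (Finset.piAntidiag (Finset.univ : Finset S) n).card = Nat.multichoose (Fintype.card S) n := by
  have := Finset.card_finsuppAntidiag_nat_eq_multichoose (s := (Finset.univ : Finset S)) n
  rw [Finset.card_univ] at this
  rw [← this, Finset.finsuppAntidiag]
  simp

lemma choose_le_pow' (m e : ℕ) : (m + e).choose e ≤ (m + 1) ^ e := by
  induction e with
  | zero => simp
  | succ e ih =>
    have h := Nat.add_one_mul_choose_eq (m + e) e
    refine Nat.le_of_mul_le_mul_right (c := e + 1) ?_ (Nat.succ_pos e)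
    calc (m + (e + 1)).choose (e + 1) * (e + 1) = (m + e + 1) * (m + e).choose e := h.symm
      _ ≤ ((m + 1) * (e + 1)) * (m + 1) ^ e := Nat.mul_le_mul (by nlinarith) ih
      _ = _ := by ring

lemma multichoose_succ_eq (e m : ℕ) : Nat.multichoose (e + 1) m = (m + e).choose e := by
  rw [Nat.multichoose_eq, show e + 1 + m - 1 = m + e by omega, ← Nat.choose_symm_add]

lemma pia_le {S : Type*} [Fintype S] [DecidableEq S] (n : ℕ) (hS : 0 < Fintype.card S) :
    (Finset.piAntidiag (Finset.univ : Finset S) n).card ≤ (n + 1) ^ (Fintype.card S - 1) := by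
  rw [card_pia]
  obtain ⟨e, he⟩ := Nat.exists_eq_succ_of_ne_zero hS.ne'
  rw [he, Nat.succ_eq_add_one, multichoose_succ_eq]
  exact choose_le_pow' n e

lemma card_tri (d : ℕ) : Fintype.card (Tri d) * 2 = d * (d + 1) := by
  have h1 : Fintype.card (Tri d) = ∑ q : Fin d, ((q : ℕ) + 1) := by
    rw [Fintype.card_subtype]
    have : (Finset.univ.filter fun p : Fin d × Fin d => p.1 ≤ p.2) =
        Finset.univ.biUnion fun q : Fin d => (Finset.Iic q).image (fun p => (p, q)) := by
      ext ⟨p, q⟩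
      simp
    rw [this, Finset.card_biUnion]
    · refine Finset.sum_congr rfl fun q _ => ?_
      rw [Finset.card_image_of_injective _ fun a b h => congrArg Prod.fst h, Fin.card_Iic]
    · intro a _ b _ hab
      rw [Function.onFun, Finset.disjoint_left]
      rintro ⟨p, q⟩ h1 h2
      simp at h1 h2
      exact hab (h1.2.trans h2.2.symm)
  rw [h1, Fin.sum_univ_eq_sum_range (fun i => i + 1) d]
  have := Finset.sum_range_id_mul_two (d + 1)
  rw [Finset.sum_range_succ'] at this
  simp at this
  linarith

/-- `e = D - 1` -/
def ee (d : ℕ) : ℕ := Fintype.card (Tri d) - 1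

lemma tri_pos {d : ℕ} (hd : 0 < d) : 0 < Fintype.card (Tri d) := by
  have := card_tri d; nlinarith [Nat.pos_of_ne_zero hd.ne']

lemma ee_spec {d : ℕ} (hd : 0 < d) : 2 * ee d + 2 = d * (d + 1) := by
  have := card_tri d; have := tri_pos hd; unfold ee; omega

lemma NN_eq {d : ℕ} (hd : 0 < d) (m : ℕ) : NN d m = (m + ee d).choose (ee d) := by
  rw [NN, card_pia, ← multichoose_succ_eq, ee, Nat.sub_add_cancel (tri_pos hd)]

lemma NN_le {d : ℕ} (hd : 0 < d) (m : ℕ) : NN d m ≤ (m + 1) ^ ee d := by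
  rw [NN_eq hd]; exact choose_le_pow' _ _

lemma NN_pos {d : ℕ} (hd : 0 < d) (m : ℕ) : 0 < NN d m := by
  rw [NN_eq hd]; exact Nat.choose_pos (by omega)

lemma part_bound (n d : ℕ) : Nat.multichoose d n ≤ d.factorial * numPartLe n d := by
  classical
  have h0 : (Finset.piAntidiag (Finset.univ : Finset (Fin d)) n).card = Nat.multichoose d n := by
    rw [card_pia, Fintype.card_fin]
  let Φ : (Fin d → ℕ) → Option (Nat.Partition n) := fun f =>
    if h : (Finset.univ.val.map f).sum = n then some (Nat.Partition.ofSums n (Finset.univ.val.map f) h)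
    else none
  have hΦ : ∀ f ∈ Finset.piAntidiag (Finset.univ : Finset (Fin d)) n,
      ∃ h : (Finset.univ.val.map f).sum = n,
        Φ f = some (Nat.Partition.ofSums n (Finset.univ.val.map f) h) := by
    intro f hf
    rw [Finset.mem_piAntidiag] at hf
    exact ⟨hf.1, dif_pos hf.1⟩
  have h1 := Finset.card_le_mul_card_image (f := Φ)
    (Finset.piAntidiag (Finset.univ : Finset (Fin d)) n) d.factorial (by
      intro a ha
      obtain ⟨g, hg, rfl⟩ := Finset.mem_image.mp ha
      calc _ ≤ ((Finset.univ : Finset (Equiv.Perm (Fin d))).image fun π : Equiv.Perm (Fin d) => g ∘ π).card := by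
            apply Finset.card_le_card
            intro f hf
            rw [Finset.mem_filter] at hf
            obtain ⟨h1, h2⟩ := hΦ f hf.1
            obtain ⟨h3, h4⟩ := hΦ g hg
            have h5 := hf.2
            rw [h2, h4, Option.some_inj] at h5
            have h6 := congrArg Nat.Partition.parts h5
            simp only [Nat.Partition.ofSums_parts] at h6
            have h7 : (Finset.univ.val.map f) = (Finset.univ.val.map g) := by
              have e1 := Multiset.filter_add_not (fun x => x ≠ 0) (Finset.univ.val.map f)
              have e2 := Multiset.filter_add_not (fun x => x ≠ 0) (Finset.univ.val.map g)
              have c1 := congrArg Multiset.card e1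
              have c2 := congrArg Multiset.card e2
              rw [← e1, ← e2]
              simp only [not_not, Multiset.filter_eq'] at *
              rw [h6]
              rw [h6] at c1
              simp only [Multiset.card_add, Multiset.card_map, Multiset.card_replicate] at c1 c2
              congr 2
              omega
            obtain ⟨π, hπ⟩ := perm_of_fibers f g (by
              intro z
              have := congrArg (Multiset.count z) h7
              rw [Multiset.count_map, Multiset.count_map] at this
              simp only [Finset.card_def, Finset.filter_val]
              simpa [eq_comm] using this)
            exact Finset.mem_image.mpr ⟨π, Finset.mem_univ _, hπ⟩
        _ ≤ _ := Finset.card_image_le.trans (by rw [Finset.card_univ, Fintype.card_perm, Fintype.card_fin]))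
  rw [h0] at h1
  refine h1.trans (Nat.mul_le_mul_left _ ?_)
  rw [numPartLe, Nat.card_eq_fintype_card, Fintype.card_subtype]
  calc _ ≤ ((Finset.univ.filter fun p : Nat.Partition n => p.parts.card ≤ d).image some).card := by
        apply Finset.card_le_card
        intro p hp
        obtain ⟨f, hf, rfl⟩ := Finset.mem_image.mp hp
        obtain ⟨h1, h2⟩ := hΦ f hf
        rw [h2]
        apply Finset.mem_image_of_mem
        rw [Finset.mem_filter]
        refine ⟨Finset.mem_univ _, ?_⟩
        rw [Nat.Partition.ofSums_parts]
        refine (Multiset.card_le_card (Multiset.filter_le _ _)).trans ?_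
        simp
    _ ≤ _ := Finset.card_image_le

lemma numPart_pos {n d : ℕ} (hd : 0 < d) : 1 ≤ numPartLe n d := by
  have h := part_bound n d
  obtain ⟨e, rfl⟩ := Nat.exists_eq_succ_of_ne_zero hd.ne'
  rw [Nat.succ_eq_add_one, multichoose_succ_eq] at h
  have : 0 < (n + e).choose e := Nat.choose_pos (by omega)
  rcases Nat.eq_zero_or_pos (numPartLe n (e + 1)) with h0 | h0
  · rw [h0] at h; omega
  · exact h0

lemma choose_growth {n k : ℕ} (hn : 2 ≤ n) (hk : 1 ≤ k) (a : ℕ) :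
    (n + (k + a)).choose (k + a) ≤ n ^ a * (n + k).choose k := by
  induction a with
  | zero => simp
  | succ a ih =>
    have h := Nat.add_one_mul_choose_eq (n + (k + a)) (k + a)
    refine Nat.le_of_mul_le_mul_right (c := k + a + 1) ?_ (by omega)
    calc (n + (k + (a + 1))).choose (k + (a + 1)) * (k + a + 1)
        = (n + (k + a) + 1) * (n + (k + a)).choose (k + a) := h.symm
      _ ≤ (n * (k + a + 1)) * (n ^ a * (n + k).choose k) := Nat.mul_le_mul (by nlinarith) ih
      _ = _ := by ring

lemma ee_eq {d : ℕ} (hd : 0 < d) : ee d = (d - 1) + d * (d - 1) / 2 := by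
  have h := ee_spec hd
  obtain ⟨e, rfl⟩ := Nat.exists_eq_succ_of_ne_zero hd.ne'
  simp only [Nat.succ_eq_add_one, Nat.add_sub_cancel] at *
  have : 2 ∣ (e + 1) * e := by rw [mul_comm]; exact (Nat.even_mul_succ_self e).two_dvd
  obtain ⟨m, hm⟩ := this
  rw [hm, Nat.mul_div_cancel_left _ (by norm_num)]
  nlinarith

lemma fact_bound (k : ℕ) : (k + 1).factorial * 4 ^ ee (k + 1) ≤ 9 ^ ee (k + 1) := by
  induction k with
  | zero =>
    have := ee_spec (d := 0 + 1) (by norm_num)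
    have h0 : ee (0 + 1) = 0 := by omega
    rw [h0]; simp
  | succ k ih =>
    have h1 := ee_spec (d := k + 1) (by omega)
    have h2 := ee_spec (d := k + 1 + 1) (by omega)
    have h3 : ee (k + 1 + 1) = ee (k + 1) + (k + 2) := by nlinarith
    rw [h3, pow_add 4 (ee (k + 1)), pow_add 9 (ee (k + 1)), Nat.factorial_succ]
    have h4 : ∀ j : ℕ, j * 4 ^ j ≤ 9 ^ j := by
      intro j
      induction j with
      | zero => simp
      | succ j ihj =>
        rw [pow_succ, pow_succ]
        have : 4 ^ j ≤ 9 ^ j := Nat.pow_le_pow_left (by norm_num) j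
        generalize 4 ^ j = a at *
        generalize 9 ^ j = b at *
        nlinarith
    have h5 := h4 (k + 2)
    calc (k + 1 + 1) * (k + 1).factorial * (4 ^ ee (k + 1) * 4 ^ (k + 2))
        = ((k + 1).factorial * 4 ^ ee (k + 1)) * ((k + 2) * 4 ^ (k + 2)) := by ring
      _ ≤ _ := Nat.mul_le_mul ih h5

lemma star_ineq {X : Type*} [Fintype X] [DecidableEq X] (hX : 2 ≤ Fintype.card X) {n d : ℕ}
    (hn : 1 ≤ n) (hd : 0 < d) (m : X → ℕ) (hm : ∑ y, m y = n) :
    NN d n * ∏ y, NN d (m y) ≤ n ^ (d * (d - 1) / 2) * numPartLe n d *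
      (n + 1) ^ (Fintype.card X * ee d) := by
  have hP : ∏ y, NN d (m y) ≤ (∏ y, (m y + 1)) ^ ee d := by
    rw [← Finset.prod_pow]
    exact Finset.prod_le_prod' fun y _ => NN_le hd _
  rcases hn.eq_or_lt with rfl | hn2
  · have h1 : ∏ y, (m y + 1) ≤ 2 := by
      calc ∏ y, (m y + 1) ≤ ∏ y, 2 ^ m y := Finset.prod_le_prod' fun y _ => Nat.lt_two_pow_self
        _ = 2 := by rw [Finset.prod_pow_eq_pow_sum, hm]; rfl
    calc _ ≤ (1 + 1) ^ ee d * 2 ^ ee d := Nat.mul_le_mul (NN_le hd 1) (hP.trans (Nat.pow_le_pow_left h1 _))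
      _ = 2 ^ (2 * ee d) := by ring
      _ ≤ 2 ^ (Fintype.card X * ee d) := Nat.pow_le_pow_right (by norm_num) (Nat.mul_le_mul_right _ hX)
      _ ≤ _ := by
        rw [one_pow, one_mul]
        exact Nat.le_mul_of_pos_left _ (numPart_pos hd)
  · have h1 : 9 * ∏ y, (m y + 1) ≤ 4 * (n + 1) ^ Fintype.card X := by
      obtain ⟨a, b, hab⟩ := Fintype.one_lt_card_iff.mp hX
      have hb : b ∈ Finset.univ.erase a := Finset.mem_erase.mpr ⟨hab.symm, Finset.mem_univ _⟩
      rw [← Finset.mul_prod_erase _ _ (Finset.mem_univ a), ← Finset.mul_prod_erase _ _ hb]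
      rw [← Finset.add_sum_erase _ _ (Finset.mem_univ a), ← Finset.add_sum_erase _ _ hb] at hm
      have h2 : ∏ y ∈ (Finset.univ.erase a).erase b, (m y + 1) ≤ (n + 1) ^ (Fintype.card X - 2) := by
        have hc : ((Finset.univ.erase a).erase b).card = Fintype.card X - 2 := by
          rw [Finset.card_erase_of_mem hb, Finset.card_erase_of_mem (Finset.mem_univ a),
            Finset.card_univ]; omega
        rw [← hc]
        apply Finset.prod_le_pow_card
        intro y hy
        have := Finset.single_le_sum (f := m) (fun i _ => Nat.zero_le _) hy
        omega
      have h3 : 9 * ((m a + 1) * (m b + 1)) ≤ 4 * (n + 1) ^ 2 := by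
        have h4 : m a + m b ≤ n := by omega
        zify at *
        nlinarith [sq_nonneg ((m a : ℤ) - m b)]
      calc 9 * ((m a + 1) * ((m b + 1) * ∏ y ∈ (Finset.univ.erase a).erase b, (m y + 1)))
          = 9 * ((m a + 1) * (m b + 1)) * ∏ y ∈ (Finset.univ.erase a).erase b, (m y + 1) := by ring
        _ ≤ (4 * (n + 1) ^ 2) * (n + 1) ^ (Fintype.card X - 2) := Nat.mul_le_mul h3 h2
        _ = _ := by rw [mul_assoc, ← pow_add, show 2 + (Fintype.card X - 2) = Fintype.card X by omega]
    have h2 : NN d n ≤ n ^ (d * (d - 1) / 2) * (d.factorial * numPartLe n d) := by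
      rw [NN_eq hd, ee_eq hd]
      rcases Nat.lt_or_ge 1 d with h | h
      · refine (choose_growth hn2 (by omega) _).trans (Nat.mul_le_mul_left _ ?_)
        refine le_trans (le_of_eq ?_) (part_bound n d)
        rw [← multichoose_succ_eq]; congr 1; omega
      · have : d = 1 := by omega
        subst this
        have := numPart_pos (n := n) (d := 1) (by norm_num)
        simpa using this
    have h3 : d.factorial * 4 ^ ee d ≤ 9 ^ ee d := by
      obtain ⟨k, rfl⟩ := Nat.exists_eq_succ_of_ne_zero hd.ne'
      exact fact_bound k
    refine Nat.le_of_mul_le_mul_right (c := 9 ^ ee d) ?_ (by positivity)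
    calc NN d n * (∏ y, NN d (m y)) * 9 ^ ee d
        ≤ (n ^ (d * (d - 1) / 2) * (d.factorial * numPartLe n d)) * (∏ y, (m y + 1)) ^ ee d * 9 ^ ee d := by
          gcongr
      _ = n ^ (d * (d - 1) / 2) * (d.factorial * numPartLe n d) * (9 * ∏ y, (m y + 1)) ^ ee d := by
          rw [mul_pow]; ring
      _ ≤ n ^ (d * (d - 1) / 2) * (d.factorial * numPartLe n d) * (4 * (n + 1) ^ Fintype.card X) ^ ee d := by
          gcongr
      _ = n ^ (d * (d - 1) / 2) * numPartLe n d * (n + 1) ^ (Fintype.card X * ee d) *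
            (d.factorial * 4 ^ ee d) := by
          rw [mul_pow, ← pow_mul]; ring
      _ ≤ _ := by gcongr

end CB

end Part7

section Part8
open Matrix

section TB
set_option linter.unusedSectionVars false

lemma fact_pow (N m : ℕ) : N ^ m * N.factorial ≤ N ^ N * m.factorial := by
  rcases le_total N m with h | h
  · have := Nat.factorial_mul_pow_sub_le_factorial h
    calc N ^ m * N.factorial = N ^ N * (N.factorial * N ^ (m - N)) := by
          rw [mul_left_comm, ← pow_add, Nat.add_sub_cancel' h, mul_comm]
      _ ≤ _ := Nat.mul_le_mul_left _ this
  · have h1 : N.factorial = m.factorial * N.descFactorial (N - m) := by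
      have := Nat.factorial_mul_descFactorial (n := N) (k := N - m) (by omega)
      rw [← this, show N - (N - m) = m by omega]
    have h2 := Nat.descFactorial_le_pow N (N - m)
    calc N ^ m * N.factorial ≤ N ^ m * (m.factorial * N ^ (N - m)) := by
          rw [h1]; gcongr
      _ = N ^ N * m.factorial := by
          rw [mul_left_comm, ← pow_add, Nat.add_sub_cancel' h, mul_comm]

variable {S : Type*} [Fintype S] [DecidableEq S]

lemma type_count (m : S → ℕ) (n : ℕ) (hm : ∑ a, m a = n) (hS : 0 < Fintype.card S) :
    n ^ n * ∏ a, (m a).factorial ≤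
      (n + 1) ^ (Fintype.card S - 1) * n.factorial * ∏ a, m a ^ m a := by
  have h1 : n ^ n = ∑ k ∈ Finset.piAntidiag (Finset.univ : Finset S) n,
      Nat.multinomial Finset.univ k * ∏ a, m a ^ k a := by
    have := Finset.sum_pow_eq_sum_piAntidiag (Finset.univ : Finset S) m n
    rw [hm] at this
    simpa using this
  rw [h1, Finset.sum_mul]
  calc _ ≤ ∑ k ∈ Finset.piAntidiag (Finset.univ : Finset S) n, n.factorial * ∏ a, m a ^ m a := by
        apply Finset.sum_le_sum
        intro k hk
        rw [Finset.mem_piAntidiag] at hk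
        have h2 := Nat.multinomial_spec Finset.univ k
        rw [hk.1] at h2
        refine le_of_mul_le_mul_left (a := ∏ a, (k a).factorial) ?_
          (Finset.prod_pos fun a _ => Nat.factorial_pos _)
        calc _ = ((∏ a, (k a).factorial) * Nat.multinomial Finset.univ k) *
              ∏ a, (m a ^ k a * (m a).factorial) := by rw [Finset.prod_mul_distrib]; ring
          _ ≤ n.factorial * ∏ a, (m a ^ m a * (k a).factorial) := by
              rw [h2]; exact Nat.mul_le_mul_left _ (Finset.prod_le_prod' fun a _ => fact_pow _ _)
          _ = _ := by rw [Finset.prod_mul_distrib]; ring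
    _ ≤ _ := by
        rw [Finset.sum_const, smul_eq_mul, ← mul_assoc]
        gcongr
        exact pia_le n hS

variable {κ : Type*} [Fintype κ] [DecidableEq κ]

lemma fib_sum (s : κ → S) : ∑ a, fib s a = Fintype.card κ := by
  simp only [fib]
  rw [← Finset.card_univ]
  exact (Finset.card_eq_sum_card_fiberwise (fun _ _ => Finset.mem_univ _)).symm

lemma perm_fiber (s s' : κ → S) (π₀ : Equiv.Perm κ) (h : s ∘ π₀ = s') :
    (Finset.univ.filter fun π : Equiv.Perm κ => s ∘ π = s').card = ∏ a, (fib s a).factorial := by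
  have h1 := DomMulAct.stabilizer_card s
  rw [Fintype.card_subtype] at h1
  simp only [Fintype.card_subtype] at h1
  refine Eq.trans ?_ h1
  apply Finset.card_bij (fun π _ => π * π₀⁻¹)
  · intro π hπ
    simp only [Finset.mem_filter, Finset.mem_univ, true_and] at *
    funext k
    have := congrFun (hπ.trans h.symm) (π₀⁻¹ k)
    simpa using this
  · intro a _ b _ hab
    exact mul_right_cancel hab
  · intro π hπ
    refine ⟨π * π₀, ?_, by simp⟩
    simp only [Finset.mem_filter, Finset.mem_univ, true_and] at *
    rw [Equiv.Perm.coe_mul, ← Function.comp_assoc, hπ, h]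

lemma type_bound (hκ : 0 < Fintype.card κ) (s : κ → S) (g : (κ → S) → ℝ) (hg : ∀ s', 0 ≤ g s') :
    ∑ π : Equiv.Perm κ, g (s ∘ π) ≤ ((Fintype.card κ).factorial : ℝ) *
      ((Fintype.card κ + 1 : ℕ) : ℝ) ^ (Fintype.card S - 1) *
      ∑ s' : κ → S, (∏ k, ((fib s (s' k) : ℝ) / Fintype.card κ)) * g s' := by
  classical
  set n := Fintype.card κ with hn
  have hS : 0 < Fintype.card S := by
    obtain ⟨k⟩ := Fintype.card_pos_iff.mp hκ
    exact Fintype.card_pos_iff.mpr ⟨s k⟩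
  have hn0 : (0:ℝ) < n := by exact_mod_cast hκ
  have h1 : ∑ π : Equiv.Perm κ, g (s ∘ π) =
      ∑ s' : κ → S, ((Finset.univ.filter fun π : Equiv.Perm κ => s ∘ π = s').card : ℝ) * g s' := by
    rw [← Finset.sum_fiberwise (s := Finset.univ) (g := fun π : Equiv.Perm κ => s ∘ π)]
    refine Finset.sum_congr rfl fun s' _ => ?_
    rw [← nsmul_eq_mul, ← Finset.sum_const]
    exact Finset.sum_congr rfl fun π hπ => by rw [(Finset.mem_filter.mp hπ).2]
  rw [h1, Finset.mul_sum]
  apply Finset.sum_le_sum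
  intro s' _
  rw [← mul_assoc]
  apply mul_le_mul_of_nonneg_right _ (hg s')
  by_cases hne : (Finset.univ.filter fun π : Equiv.Perm κ => s ∘ π = s').Nonempty
  · obtain ⟨π₀, hπ₀⟩ := hne
    have hπ : s ∘ π₀ = s' := (Finset.mem_filter.mp hπ₀).2
    rw [perm_fiber s s' π₀ hπ]
    have h2 : ∏ k, ((fib s (s' k) : ℝ) / n) = (∏ a, (fib s a : ℝ) ^ fib s a) / (n:ℝ) ^ n := by
      rw [Finset.prod_div_distrib, Finset.prod_const, Finset.card_univ, ← hn]
      congr 1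
      rw [← hπ]
      simp only [Function.comp]
      rw [Equiv.prod_comp π₀ (fun k => (fib s (s k) : ℝ)),
        ← Finset.prod_fiberwise (s := Finset.univ) (g := s)]
      refine Finset.prod_congr rfl fun a _ => ?_
      rw [fib, ← Finset.prod_const]
      exact Finset.prod_congr rfl fun k hk => by rw [(Finset.mem_filter.mp hk).2]; rfl
    rw [h2, mul_div_assoc', le_div_iff₀ (by positivity)]
    have := type_count (fib s) n (fib_sum s) hS
    have h3 : ((n ^ n * ∏ a, (fib s a).factorial : ℕ) : ℝ) ≤
      (((n + 1) ^ (Fintype.card S - 1) * n.factorial * ∏ a, fib s a ^ fib s a : ℕ) : ℝ) := by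
      exact_mod_cast this
    push_cast at h3 ⊢
    linarith
  · rw [Finset.not_nonempty_iff_eq_empty] at hne
    rw [hne, Finset.card_empty, Nat.cast_zero]
    have : 0 ≤ ∏ k, ((fib s (s' k) : ℝ) / n) := Finset.prod_nonneg fun k _ => by positivity
    positivity

end TB

end Part8

section Part9
open Matrix

section CQ
set_option linter.unusedSectionVars false

variable {X B : Type*} [Fintype X] [DecidableEq X] [Fintype B] [DecidableEq B]

lemma cq_mul (v w : X → ℝ) (A C : X → Matrix B B ℂ) :
    cqState v A * cqState w C = cqState (fun x => v x * w x) (fun x => A x * C x) := by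
  ext ⟨x, i⟩ ⟨y, j⟩
  simp only [mul_apply, cqState, Matrix.of_apply, Fintype.sum_prod_type]
  rw [Finset.sum_eq_single x]
  · by_cases h : x = y
    · subst h
      simp only [if_true]
      rw [Finset.mul_sum]
      refine Finset.sum_congr rfl fun k _ => ?_
      push_cast; ring
    · simp [h]
  · intro z _ hz
    simp [hz.symm]
  · simp

lemma cq_trace (w : X → ℝ) (A : X → Matrix B B ℂ) :
    (cqState w A).trace.re = ∑ x, w x * (A x).trace.re := by
  simp only [trace, diag, cqState, Matrix.of_apply, Fintype.sum_prod_type, if_true, Complex.re_sum,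
    Complex.re_ofReal_mul, Finset.mul_sum]

lemma cq_conj (A : X → Matrix B B ℂ) :
    (cqState (fun _ => 1) A)ᴴ = cqState (fun _ => 1) (fun x => (A x)ᴴ) := by
  ext ⟨x, i⟩ ⟨y, j⟩
  simp only [conjTranspose_apply, cqState, Matrix.of_apply]
  by_cases h : x = y
  · subst h; simp
  · simp [h, Ne.symm h]

lemma cq_psd {A : X → Matrix B B ℂ} (hA : ∀ x, (A x).PosSemidef) :
    (cqState (fun _ => 1) A).PosSemidef := by
  choose C hC using fun x => la_sq (hA x)
  have : cqState (fun _ => 1) A = (cqState (fun _ => 1) C)ᴴ * cqState (fun _ => 1) C := by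
    rw [cq_conj, cq_mul]
    simp only [mul_one, ← hC]
  rw [this]; exact posSemidef_conjTranspose_mul_self _

lemma cq_one_sub (A : X → Matrix B B ℂ) :
    1 - cqState (fun _ => 1) A = cqState (fun _ => 1) (fun x => 1 - A x) := by
  ext ⟨x, i⟩ ⟨y, j⟩
  simp only [Matrix.sub_apply, cqState, Matrix.of_apply, one_apply, Prod.mk.injEq]
  by_cases h : x = y
  · subst h; simp
  · simp [h]

end CQ

section SY
set_option linter.unusedSectionVars false
variable {κ X δ : Type*} [Fintype κ] [DecidableEq κ] [Fintype X] [DecidableEq X] [Fintype δ]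
  [DecidableEq δ]

/-- action of a permutation on the tensor factors -/
def pm (π : Equiv.Perm κ) (A : Matrix (κ → δ) (κ → δ) ℂ) : Matrix (κ → δ) (κ → δ) ℂ :=
  A.submatrix (fun i => i ∘ π) (fun i => i ∘ π)

lemma pm_psd (π : Equiv.Perm κ) {A : Matrix (κ → δ) (κ → δ) ℂ} (hA : A.PosSemidef) :
    (pm π A).PosSemidef := hA.submatrix _

lemma pm_one (π : Equiv.Perm κ) : pm π (1 : Matrix (κ → δ) (κ → δ) ℂ) = 1 := by
  apply submatrix_one
  intro i j h
  funext k
  have := congrFun h (π.symm k)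
  simpa using this

lemma pm_trace (π : Equiv.Perm κ) (A : Matrix (κ → δ) (κ → δ) ℂ) : (pm π A).trace = A.trace := by
  simp only [trace, diag, pm, submatrix_apply]
  exact sum_perm π (fun i => A i i)

lemma pm_mul_trace (π : Equiv.Perm κ) (A C : Matrix (κ → δ) (κ → δ) ℂ) :
    (pm π A * C).trace = (A * pm π.symm C).trace := by
  have h : pm π (A * pm π.symm C) = pm π A * C := by
    ext i j
    simp only [pm, submatrix_apply, mul_apply]
    rw [← sum_perm π]
    refine Finset.sum_congr rfl fun l _ => ?_
    have e : ∀ f : κ → δ, (f ∘ π) ∘ π.symm = f := fun f => by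
      funext k; simp
    rw [e, e]
  rw [← h, pm_trace]

/-- symmetrization of a family of tests -/
def symT (T : (κ → X) → Matrix (κ → δ) (κ → δ) ℂ) (x : κ → X) : Matrix (κ → δ) (κ → δ) ℂ :=
  ((((Fintype.card κ).factorial : ℝ)⁻¹ : ℝ) : ℂ) • ∑ π : Equiv.Perm κ, pm π (T (x ∘ π))

lemma symT_psd {T : (κ → X) → Matrix (κ → δ) (κ → δ) ℂ} (hT : ∀ x, (T x).PosSemidef) (x : κ → X) :
    (symT T x).PosSemidef :=
  psd_smul (posSemidef_sum _ fun π _ => pm_psd π (hT _)) (by positivity)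

lemma symT_one_sub (T : (κ → X) → Matrix (κ → δ) (κ → δ) ℂ) (x : κ → X) :
    1 - symT T x = symT (fun x => 1 - T x) x := by
  have h1 : ∀ π : Equiv.Perm κ, pm π (1 - T (x ∘ π)) = 1 - pm π (T (x ∘ π)) := by
    intro π
    nth_rw 2 [← pm_one π]
    rfl
  simp only [symT, h1, Finset.sum_sub_distrib, smul_sub]
  congr 1
  rw [Finset.sum_const, Finset.card_univ, Fintype.card_perm, ← Nat.cast_smul_eq_nsmul ℂ, smul_smul]
  have : ((((Fintype.card κ).factorial : ℝ)⁻¹ : ℝ) : ℂ) * ((Fintype.card κ).factorial : ℂ) = 1 := by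
    push_cast
    exact inv_mul_cancel₀ (by exact_mod_cast (Nat.factorial_pos _).ne')
  rw [this, one_smul]

lemma symT_sum (T R : (κ → X) → Matrix (κ → δ) (κ → δ) ℂ) (w : (κ → X) → ℝ)
    (hw : ∀ x (π : Equiv.Perm κ), w (x ∘ π) = w x) :
    ∑ x, w x * (symT T x * R x).trace.re = ((Fintype.card κ).factorial : ℝ)⁻¹ *
      ∑ π : Equiv.Perm κ, ∑ x, w x * (T x * pm π.symm (R (x ∘ π.symm))).trace.re := by
  have h1 : ∀ x, w x * (symT T x * R x).trace.re = ((Fintype.card κ).factorial : ℝ)⁻¹ *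
      ∑ π : Equiv.Perm κ, w x * (T (x ∘ π) * pm π.symm (R x)).trace.re := by
    intro x
    simp only [symT]
    rw [smul_mul_assoc, trace_smul, smul_eq_mul, Complex.re_ofReal_mul, Finset.sum_mul, trace_sum,
      Complex.re_sum, ← mul_assoc, mul_comm (w x), mul_assoc, Finset.mul_sum]
    simp only [pm_mul_trace]
  simp only [h1]
  rw [← Finset.mul_sum, Finset.sum_comm]
  congr 1
  refine Finset.sum_congr rfl fun π _ => ?_
  rw [← sum_perm π.symm]
  refine Finset.sum_congr rfl fun x _ => ?_
  have e : (x ∘ π.symm) ∘ π = x := by funext k; simp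
  rw [e, hw]

end SY

section CORE
set_option linter.unusedSectionVars false

set_option maxHeartbeats 2000000 in
lemma core {X : Type*} [Fintype X] [DecidableEq X] (hX : 2 ≤ Fintype.card X) {n d : ℕ}
    (hn : 1 ≤ n) (hd : 0 < d) (R : ℝ) :
    ∃ (T : (Fin n → X) → Matrix (Fin n → Fin d) (Fin n → Fin d) ℂ)
      (σU : Matrix (Fin n → Fin d) (Fin n → Fin d) ℂ) (c : ℝ),
      (∀ x, (T x).PosSemidef) ∧ (∀ x, (1 - T x).PosSemidef) ∧ σU.PosSemidef ∧ 0 < c ∧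
      c * σU.trace.re ≤ ((n : ℝ) + 1) ^ (Fintype.card X * ee d) * (2 : ℝ) ^ ((n : ℝ) * R) ∧
      (∀ x, ∀ σ ∈ Mc (fun _ : Fin n => ()) d, IsDensity σ →
        (T x * σ).trace.re ≤ (n : ℝ) ^ (d * (d - 1) / 2) * numPartLe n d *
          (2 : ℝ) ^ (-(n : ℝ) * R)) ∧
      (∀ x, ∀ ω : X → Matrix (Fin d) (Fin d) ℂ, (∀ a, IsDensity (ω a)) →
        ∀ t ∈ Set.Ioo (0:ℝ) 1, ((1 - T x) * tensorFam (fun k => ω (x k))).trace.re ≤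
          c ^ t * (mpow σU t * mpow (tensorFam (fun k => ω (x k))) (1 - t)).trace.re) := by
  obtain ⟨σU, hU1, hU2, hU3, hU4, hU5⟩ := univ_color (fun _ : Fin n => ()) hd
  have hfib : fib (fun _ : Fin n => ()) () = n := by simp [fib]
  simp only [Finset.univ_unique, Finset.prod_singleton, PUnit.default_eq_unit, hfib] at hU4
  choose σ hσ1 hσ2 hσ3 hσ4 hσ5 using fun x : Fin n → X => univ_color x hd
  have hUx : ∀ x : Fin n → X, σU ∈ Mc x d := by
    intro x π _ i j
    exact hU1 π rfl i j
  have hcomm : ∀ x : Fin n → X, σ x * σU = σU * σ x := fun x => (hσ3 x σU (hUx x)).symm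
  have hN : (0:ℝ) < NN d n := by exact_mod_cast NN_pos hd n
  obtain ⟨K, hK⟩ : ∃ K : ℝ, K = ((n : ℝ) + 1) ^ (Fintype.card X * ee d) * (2 : ℝ) ^ ((n : ℝ) * R) :=
    ⟨_, rfl⟩
  have hK0 : 0 < K := by rw [hK]; positivity
  have hc : 0 < K / NN d n := by positivity
  have hTT := fun x : Fin n → X => la_test (hσ2 x) hU2.posSemidef (hcomm x) hc
  choose T hT1 hT2 hT3 hT4 using hTT
  refine ⟨T, σU, K / NN d n, hT1, hT2, hU2.posSemidef, hc, ?_, ?_, ?_⟩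
  · calc K / NN d n * σU.trace.re ≤ K / NN d n * NN d n := by gcongr
      _ = _ := by rw [div_mul_cancel₀ _ hN.ne', hK]
  · intro x τ hτ hτd
    have h1 := la_trace_mono_right (hT1 x) (hU5 τ hτ hτd)
    refine h1.trans ((hT3 x).trans ?_)
    have h2 := star_ineq hX hn hd (fib x) (by rw [fib_sum, Fintype.card_fin])
    have h3 : (NN d n : ℝ) * ∏ y, (NN d (fib x y) : ℝ) ≤ (n : ℝ) ^ (d * (d - 1) / 2) * numPartLe n d *
      ((n : ℝ) + 1) ^ (Fintype.card X * ee d) := by exact_mod_cast h2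
    rw [div_le_iff₀ hc, mul_div_assoc', le_div_iff₀ hN]
    have h4 : (2 : ℝ) ^ (-(n : ℝ) * R) * (2 : ℝ) ^ ((n : ℝ) * R) = 1 := by
      rw [← Real.rpow_add (by norm_num)]; simp
    calc _ ≤ (∏ y, (NN d (fib x y) : ℝ)) * NN d n := by gcongr; exact hσ4 x
      _ ≤ (n : ℝ) ^ (d * (d - 1) / 2) * numPartLe n d *
      ((n : ℝ) + 1) ^ (Fintype.card X * ee d) := by rw [mul_comm]; exact h3
      _ = (n : ℝ) ^ (d * (d - 1) / 2) * numPartLe n d *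
      ((n : ℝ) + 1) ^ (Fintype.card X * ee d) * ((2 : ℝ) ^ (-(n : ℝ) * R) * (2 : ℝ) ^ ((n : ℝ) * R)) := by
          rw [h4, mul_one]
      _ = _ := by rw [hK]; ring
  · intro x ω hω t ht
    have hdens := tf_density (fun k => hω (x k))
    have hmem : tensorFam (fun k => ω (x k)) ∈ Mc x d := Mc_tf x ω
    exact hT4 x t ht _ hdens.1 (hσ5 x _ hmem hdens) (hσ3 x _ hmem).symm

variable {X : Type*} [Fintype X] [DecidableEq X] {d : ℕ}

lemma mpow_le_one {m : Type*} [Fintype m] [DecidableEq m] {A : Matrix m m ℂ} (hA : A.PosSemidef)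
    (h1 : (1 - A).PosSemidef) {p : ℝ} (hp : 0 < p) : (1 - mpow A p).PosSemidef := by
  obtain ⟨U, a, hU, ha, rfl⟩ := la_psd_decomp hA
  have hU' : U * Uᴴ = 1 := mul_eq_one_comm.mp hU
  have e1 : (1 : Matrix m m ℂ) = U * diagonal (fun i => ((1:ℝ) : ℂ)) * Uᴴ := by
    simp [hU']
  rw [e1, cj_sub U (fun _ => 1)] at h1
  have h2 := fun i => conj_psd_iff hU h1 i
  rw [mpow_eq p hU rfl, e1, cj_sub U (fun _ => 1)]
  apply la_conj_psd
  intro i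
  rw [spow_eq hp.ne' (ha i), sub_nonneg]
  exact Real.rpow_le_one (ha i) (by linarith [h2 i]) hp.le

lemma dens_le_one {m : Type*} [Fintype m] [DecidableEq m] {A : Matrix m m ℂ} (hA : IsDensity A) :
    (1 - A).PosSemidef := by
  have := la_le_trace hA.1
  rwa [hA.2, Complex.one_re, Complex.ofReal_one, one_smul] at this

/-- the averaged operator -/
def avg (P : X → ℝ) (ω : X → Matrix (Fin d) (Fin d) ℂ) (t : ℝ) : Matrix (Fin d) (Fin d) ℂ :=
  ∑ x, P x • mpow (ω x) (1 - t)

lemma avg_eq (P : X → ℝ) (ω : X → Matrix (Fin d) (Fin d) ℂ) (t : ℝ) :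
    avg P ω t = ∑ x, (P x : ℂ) • mpow (ω x) (1 - t) := by
  refine Finset.sum_congr rfl fun x _ => ?_
  exact (RCLike.real_smul_eq_coe_smul (K := ℂ) (P x) _)

lemma avg_psd {P : X → ℝ} (hP : ∀ x, 0 ≤ P x) {ω : X → Matrix (Fin d) (Fin d) ℂ}
    (hω : ∀ x, IsDensity (ω x)) (t : ℝ) : (avg P ω t).PosSemidef := by
  rw [avg_eq]
  exact posSemidef_sum _ fun x _ => psd_smul (mpow_psd _ (hω x).1) (hP x)

lemma avg_le {P : X → ℝ} (hP : ∀ x, 0 ≤ P x) (hP1 : ∑ x, P x = 1)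
    {ω : X → Matrix (Fin d) (Fin d) ℂ}
    (hω : ∀ x, IsDensity (ω x)) {t : ℝ} (ht : t < 1) : (1 - avg P ω t).PosSemidef := by
  have : 1 - avg P ω t = ∑ x, (P x : ℂ) • (1 - mpow (ω x) (1 - t)) := by
    rw [avg_eq]
    simp only [smul_sub, Finset.sum_sub_distrib]
    rw [← Finset.sum_smul, ← Complex.ofReal_sum, hP1, Complex.ofReal_one, one_smul]
  rw [this]
  exact posSemidef_sum _ fun x _ =>
    psd_smul (mpow_le_one (hω x).1 (dens_le_one (hω x)) (by linarith)) (hP x)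

lemma renyi_lower {P : X → ℝ} (hP : ∀ x, 0 ≤ P x) (hP1 : ∑ x, P x = 1) (hd : 0 < d)
    {ω : X → Matrix (Fin d) (Fin d) ℂ}
    (hω : ∀ x, IsDensity (ω x)) {t : ℝ} (ht : t ∈ Set.Ioo (0:ℝ) 1) :
    -((1 - t) / t) * Real.logb 2 d ≤ renyiI P ω t := by
  obtain ⟨h0, h1⟩ := ht
  have hA := avg_psd hP hω t
  have hp : 0 < 1 / (1 - t) := by apply one_div_pos.mpr; linarith
  have h2 := mpow_le_one hA (avg_le hP hP1 hω h1) hp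
  have h3 : (mpow (avg P ω t) (1 / (1 - t))).trace.re ≤ d := by
    have := (Complex.le_def.mp h2.trace_nonneg).1
    rw [trace_sub, trace_one, Fintype.card_fin, Complex.sub_re, Complex.natCast_re,
      Complex.zero_re] at this
    linarith
  have h4 := mpow_trace (1 / (1 - t)) hA
  unfold renyiI
  change _ ≤ -((1 - t) / t) * Real.logb 2 (mpow (avg P ω t) (1 / (1 - t))).trace.re
  have h5 : 0 ≤ (1 - t) / t := div_nonneg (by linarith) h0.le
  have hd1 : (1:ℝ) ≤ d := by exact_mod_cast hd
  have h6 : Real.logb 2 (mpow (avg P ω t) (1 / (1 - t))).trace.re ≤ Real.logb 2 d := by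
    rcases h4.eq_or_lt with h | h
    · rw [← h, Real.logb_zero]; exact Real.logb_nonneg (by norm_num) hd1
    · exact Real.logb_le_logb_of_le (by norm_num) h h3
  nlinarith

lemma renyi_single [Subsingleton X] {P : X → ℝ} (hP1 : ∑ x, P x = 1)
    {ω : X → Matrix (Fin d) (Fin d) ℂ}
    (hω : ∀ x, IsDensity (ω x)) {t : ℝ} (ht : t ∈ Set.Ioo (0:ℝ) 1) :
    renyiI P ω t = 0 := by
  obtain ⟨h0, h1⟩ := ht
  have hne : Nonempty X := by
    by_contra h
    rw [not_nonempty_iff] at h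
    simp at hP1
  obtain ⟨x⟩ := hne
  have huniv : (Finset.univ : Finset X) = {x} := by ext y; simp [Subsingleton.elim y x]
  rw [huniv, Finset.sum_singleton] at hP1
  unfold renyiI
  rw [huniv, Finset.sum_singleton, hP1, one_smul]
  obtain ⟨U, a, hU, ha, hA⟩ := la_psd_decomp (hω x).1
  have e1 := mpow_eq (1 - t) hU hA
  have e2 := mpow_eq (1 / (1 - t)) hU e1
  have e3 : mpow (mpow (ω x) (1 - t)) (1 / (1 - t)) = ω x := by
    rw [e2]
    refine Eq.trans ?_ hA.symm
    congr 3
    funext i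
    have hp : 1 - t ≠ 0 := by linarith
    rw [spow_eq hp (ha i), spow_eq (one_div_ne_zero hp) (Real.rpow_nonneg (ha i) _),
      ← Real.rpow_mul (ha i), mul_one_div_cancel hp, Real.rpow_one]
  rw [e3, (hω x).2]
  simp

lemma i_bound {n : ℕ} (hn : 1 ≤ n) {P : X → ℝ} (hP : ∀ x, 0 ≤ P x)
    {ω : X → Matrix (Fin d) (Fin d) ℂ} (hω : ∀ x, IsDensity (ω x)) {t : ℝ}
    (ht : t ∈ Set.Ioo (0:ℝ) 1) {σU : Matrix (Fin n → Fin d) (Fin n → Fin d) ℂ}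
    (hσ : σU.PosSemidef) :
    ∑ x : Fin n → X, (∏ k, P (x k)) * (mpow σU t * mpow (tensorFam (fun k => ω (x k))) (1 - t)).trace.re
      ≤ σU.trace.re ^ t * (2:ℝ) ^ (-((n:ℝ) * t * renyiI P ω t)) := by
  have hA := avg_psd hP hω t
  have h1 : ∑ x : Fin n → X, (∏ k, P (x k)) *
      (mpow σU t * mpow (tensorFam (fun k => ω (x k))) (1 - t)).trace.re =
      (mpow σU t * tensorFam (fun _ : Fin n => avg P ω t)).trace.re := by
    simp only [avg_eq]
    rw [tf_sum (fun (_ : Fin n) (x : X) => (P x : ℂ) • mpow (ω x) (1 - t)), Finset.mul_sum, trace_sum,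
      Complex.re_sum]
    refine Finset.sum_congr rfl fun x _ => ?_
    rw [tf_smul (fun k => (P (x k) : ℂ)), Matrix.mul_smul, trace_smul, smul_eq_mul,
      ← Complex.ofReal_prod, Complex.re_ofReal_mul, tf_mpow fun k => (hω (x k)).1]
  rw [h1]
  have h2 := la_holder hσ (tf_psd (fun _ : Fin n => hA)) ht
  refine h2.trans ?_
  rw [tf_mpow (fun _ : Fin n => hA), tf_trace, Finset.prod_const, Finset.card_univ, Fintype.card_fin]
  have hM := mpow_psd (1 / (1 - t)) hA
  rw [← la_psd_trace_re hM, ← Complex.ofReal_pow, Complex.ofReal_re]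
  have h3 : 0 ≤ σU.trace.re := (Complex.le_def.mp hσ.trace_nonneg).1
  refine mul_le_mul_of_nonneg_left ?_ (Real.rpow_nonneg h3 _)
  obtain ⟨ht0, ht1⟩ := ht
  unfold renyiI
  change _ ≤ (2:ℝ) ^ (-((n:ℝ) * t * (-((1 - t) / t) * Real.logb 2 (mpow (avg P ω t) (1 / (1 - t))).trace.re)))
  have h4 := mpow_trace (1 / (1 - t)) hA
  generalize (mpow (avg P ω t) (1 / (1 - t))).trace.re = τ at *
  rcases h4.eq_or_lt with rfl | h
  · rw [zero_pow (by omega), Real.zero_rpow (by linarith)]; positivity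
  · have e1 : -((n:ℝ) * t * (-((1 - t) / t) * Real.logb 2 τ)) = Real.logb 2 τ * (n * (1 - t)) := by
      field_simp
    rw [e1, Real.rpow_mul (by norm_num), Real.rpow_logb (by norm_num) (by norm_num) h,
      Real.rpow_mul h.le, Real.rpow_natCast]

end CORE

end Part9

section Part10
open Matrix

section FIN
set_option linter.unusedSectionVars false

lemma prod_w {X : Type*} {n : ℕ} (P : X → ℝ) (x : Fin n → X) (π : Equiv.Perm (Fin n)) :
    ∏ k, P ((x ∘ π) k) = ∏ k, P (x k) := Equiv.prod_comp π (fun k => P (x k))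

lemma sum_w {X : Type*} [Fintype X] {n : ℕ} {P : X → ℝ} (hP1 : ∑ x, P x = 1) :
    ∑ x : Fin n → X, ∏ k, P (x k) = 1 := by
  rw [← prod_sum_pi (fun (_ : Fin n) (x : X) => P x)]
  simp [hP1]

lemma ii_fin {X : Type*} [Fintype X] [DecidableEq X] {n d : ℕ}
    {T : (Fin n → X) → Matrix (Fin n → Fin d) (Fin n → Fin d) ℂ} {b : ℝ}
    (hT : ∀ x, ∀ σ ∈ Mc (fun _ : Fin n => ()) d, IsDensity σ → (T x * σ).trace.re ≤ b)
    {P : X → ℝ} (hP : ∀ x, 0 ≤ P x) (hP1 : ∑ x, P x = 1)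
    {σ : Matrix (Fin n → Fin d) (Fin n → Fin d) ℂ} (hσ : IsDensity σ) :
    ∑ x : Fin n → X, (∏ k, P (x k)) * (symT T x * σ).trace.re ≤ b := by
  rw [symT_sum T (fun _ => σ) (fun x => ∏ k, P (x k)) (fun x π => prod_w P x π)]
  obtain ⟨τ, hτ⟩ : ∃ τ : Matrix (Fin n → Fin d) (Fin n → Fin d) ℂ,
      τ = ((((Fintype.card (Fin n)).factorial : ℝ)⁻¹ : ℝ) : ℂ) •
        ∑ π : Equiv.Perm (Fin n), pm π.symm σ := ⟨_, rfl⟩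
  have h1 : τ ∈ Mc (fun _ : Fin n => ()) d := by
    intro π _ i j
    rw [hτ, Matrix.smul_apply, Matrix.smul_apply, Matrix.sum_apply, Matrix.sum_apply]
    congr 1
    refine Fintype.sum_equiv (Equiv.mulRight π⁻¹) _ _ fun π' => ?_
    simp only [pm, submatrix_apply, Equiv.coe_mulRight]
    congr 1
  have h2 : IsDensity τ := by
    constructor
    · rw [hτ]
      exact psd_smul (posSemidef_sum _ fun π _ => pm_psd _ hσ.1) (by positivity)
    · rw [hτ, trace_smul, trace_sum]
      simp only [pm_trace, hσ.2]
      rw [Finset.sum_const, Finset.card_univ, Fintype.card_perm, smul_eq_mul, nsmul_eq_mul, mul_one]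
      push_cast
      exact inv_mul_cancel₀ (by exact_mod_cast (Nat.factorial_pos _).ne')
  have h3 : ((Fintype.card (Fin n)).factorial : ℝ)⁻¹ *
      ∑ π : Equiv.Perm (Fin n), ∑ x : Fin n → X, (∏ k, P (x k)) * (T x * pm π.symm σ).trace.re
      = ∑ x : Fin n → X, (∏ k, P (x k)) * (T x * τ).trace.re := by
    rw [Finset.sum_comm, Finset.mul_sum]
    refine Finset.sum_congr rfl fun x _ => ?_
    rw [hτ, Matrix.mul_smul, trace_smul, smul_eq_mul, Complex.re_ofReal_mul, Matrix.mul_sum,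
      trace_sum, Complex.re_sum, ← Finset.mul_sum]
    ring
  rw [h3]
  calc _ ≤ ∑ x : Fin n → X, (∏ k, P (x k)) * b := by
        refine Finset.sum_le_sum fun x _ => ?_
        exact mul_le_mul_of_nonneg_left (hT x τ h1 h2) (Finset.prod_nonneg fun k _ => hP _)
    _ = b := by rw [← Finset.sum_mul, sum_w hP1, one_mul]

lemma mix_dens {S : Type*} {d : ℕ} {A : S → Matrix (Fin d) (Fin d) ℂ} (hA : ∀ s, IsDensity (A s))
    (F : Finset S) {Q : S → ℝ} (hQ : ∀ s, 0 ≤ Q s) (hQ1 : ∑ s ∈ F, Q s = 1) :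
    IsDensity (∑ s ∈ F, Q s • A s) := by
  have e : ∑ s ∈ F, Q s • A s = ∑ s ∈ F, (Q s : ℂ) • A s :=
    Finset.sum_congr rfl fun s _ => RCLike.real_smul_eq_coe_smul (K := ℂ) (Q s) _
  rw [e]
  constructor
  · exact posSemidef_sum _ fun s _ => psd_smul (hA s).1 (hQ s)
  · rw [trace_sum]
    simp only [trace_smul, (hA _).2, smul_eq_mul, mul_one]
    exact_mod_cast hQ1

/-- the permutation/type part of (i) -/
lemma i_fin {X S : Type*} [Fintype X] [DecidableEq X] [Fintype S] [DecidableEq S] {n d : ℕ}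
    (hn : 1 ≤ n)
    {D : (Fin n → X) → Matrix (Fin n → Fin d) (Fin n → Fin d) ℂ} (hD : ∀ x, (D x).PosSemidef)
    {A : X → S → Matrix (Fin d) (Fin d) ℂ} (hA : ∀ x s, IsDensity (A x s))
    {P : X → ℝ} (hP : ∀ x, 0 ≤ P x) (s : Fin n → S) :
    ∑ x : Fin n → X, (∏ k, P (x k)) * (symT D x * tensorFam fun k => A (x k) (s k)).trace.re ≤
      ((n : ℝ) + 1) ^ (Fintype.card S - 1) *
      ∑ x : Fin n → X, (∏ k, P (x k)) *
        (D x * tensorFam fun k => ∑ a, ((fib s a : ℝ) / n) • A (x k) a).trace.re := by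
  rw [symT_sum D (fun x => tensorFam fun k => A (x k) (s k)) (fun x => ∏ k, P (x k))
    (fun x π => prod_w P x π)]
  have e1 : ∀ (π : Equiv.Perm (Fin n)) (x : Fin n → X),
      pm π.symm (tensorFam fun k => A ((x ∘ π.symm) k) (s k)) =
        tensorFam fun k => A (x k) ((s ∘ π) k) := by
    intro π x
    ext i j
    simp only [pm, submatrix_apply]
    rw [tf_perm]
    congr 2
    funext k
    simp
  simp only [e1]
  have hg : ∀ s' : Fin n → S, 0 ≤ ∑ x : Fin n → X, (∏ k, P (x k)) *
      (D x * tensorFam fun k => A (x k) (s' k)).trace.re := by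
    intro s'
    refine Finset.sum_nonneg fun x _ => mul_nonneg (Finset.prod_nonneg fun k _ => hP _) ?_
    exact la_trace_mul_nonneg (hD x) (tf_psd fun k => (hA _ _).1)
  have h1 := type_bound (by rw [Fintype.card_fin]; omega) s (fun s' : Fin n → S => ∑ x : Fin n → X,
    (∏ k, P (x k)) * (D x * tensorFam fun k => A (x k) (s' k)).trace.re) hg
  have hf : (0:ℝ) < ((Fintype.card (Fin n)).factorial : ℝ) := by
    exact_mod_cast Nat.factorial_pos _
  rw [inv_mul_le_iff₀ hf]
  refine h1.trans (le_of_eq ?_)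
  rw [mul_assoc]
  congr 1
  rw [Fintype.card_fin]
  push_cast
  congr 1
  simp only [Finset.mul_sum]
  rw [Finset.sum_comm]
  refine Finset.sum_congr rfl fun x _ => ?_
  have e2 : (fun k : Fin n => ∑ a, ((fib s a : ℝ) / n) • A (x k) a) =
      fun k => ∑ a, ((((fib s a : ℝ) / n : ℝ)) : ℂ) • A (x k) a := by
    funext k
    exact Finset.sum_congr rfl fun a _ => RCLike.real_smul_eq_coe_smul (K := ℂ) _ _
  rw [e2, tf_sum (fun (k : Fin n) (a : S) => ((((fib s a : ℝ) / n : ℝ)) : ℂ) • A (x k) a),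
    Finset.mul_sum, trace_sum, Complex.re_sum, Finset.mul_sum]
  refine Finset.sum_congr rfl fun s' _ => ?_
  rw [tf_smul (fun k => ((((fib s (s' k) : ℝ) / n : ℝ)) : ℂ)), Matrix.mul_smul, trace_smul,
    smul_eq_mul, ← Complex.ofReal_prod, Complex.re_ofReal_mul]
  ring

lemma eps_mono {n d : ℕ} {A B : Fin n → Matrix (Fin d) (Fin d) ℂ} (hA : ∀ k, (A k).PosSemidef)
    {ε : ℝ} (h : ∀ k, Loewner (A k) ((1 + ε) • B k)) :
    (((((1 + ε) ^ n : ℝ)) : ℂ) • tensorFam B - tensorFam A).PosSemidef := by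
  have h1 := tf_mono hA h
  have e : tensorFam (fun k => (1 + ε) • B k) = ((((1 + ε) ^ n : ℝ)) : ℂ) • tensorFam B := by
    have e2 : (fun k => (1 + ε) • B k) = fun k => ((1 + ε : ℝ) : ℂ) • B k := by
      funext k
      exact RCLike.real_smul_eq_coe_smul (K := ℂ) _ _
    rw [e2, tf_smul (fun _ => ((1 + ε : ℝ) : ℂ))]
    simp
  rwa [e] at h1

end FIN

end Part10

section Part11
open Matrix

lemma dens_d {d : ℕ} {A : Matrix (Fin d) (Fin d) ℂ} (hA : IsDensity A) : 0 < d := by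
  rcases Nat.eq_zero_or_pos d with h | h
  · subst h
    have := hA.2
    simp [Matrix.trace] at this
  · exact h

lemma inf_d {X S : Type*} [Fintype X] [Nonempty S] {d : ℕ}
    {ρ : X → S → Matrix (Fin d) (Fin d) ℂ} (hρ : ∀ x s, IsDensity (ρ x s)) {P : X → ℝ}
    (hP1 : ∑ x, P x = 1) : 0 < d := by
  rcases isEmpty_or_nonempty X with h | h
  · simp at hP1
  · exact dens_d (hρ (Classical.arbitrary X) (Classical.arbitrary S))

lemma exp_conv {n d : ℕ} (hd : 0 < d) :
    (n : ℝ) ^ (d * (d - 1) / 2) = (n : ℝ) ^ ((d : ℝ) * ((d : ℝ) - 1) / 2) := by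
  have h : ((d * (d - 1) / 2 : ℕ) : ℝ) = (d : ℝ) * ((d : ℝ) - 1) / 2 := by
    rw [Nat.cast_div (Nat.even_mul_pred_self d).two_dvd (by norm_num), Nat.cast_mul,
      Nat.cast_sub hd]
    simp
  rw [← h, Real.rpow_natCast]

lemma final_i {n d N K : ℕ} (hn : 1 ≤ n) (hd : 0 < d) (hN : 1 ≤ N) {t ε c τ R I J L M : ℝ}
    (ht : t ∈ Set.Ioo (0:ℝ) 1) (hε : 0 < ε) (hc : 0 ≤ c) (hτ : 0 ≤ τ)
    (hcU : c * τ ≤ ((n : ℝ) + 1) ^ (K * ee d) * (2 : ℝ) ^ ((n : ℝ) * R))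
    (hIJ : I ≤ J) (h3 : L ≤ ((n : ℝ) + 1) ^ (N - 1) * M)
    (h5 : M ≤ c ^ t * (τ ^ t * (2:ℝ) ^ (-((n:ℝ) * t * J)))) :
    (1 + ε) ^ n * L ≤ ((n : ℝ) + 1) ^ (((N : ℝ) - 1) + t * K * ((d : ℝ) - 1) * (d : ℝ) / 2
                  + ((d : ℝ) - 1) * K * t) * (1 + ε) ^ n * (2 : ℝ) ^ ((n : ℝ) * t * (R - I)) := by
  have hn1 : (0:ℝ) < (n : ℝ) + 1 := by positivity
  have ht0 := ht.1
  have h6 : M ≤ ((n : ℝ) + 1) ^ ((K : ℝ) * ee d * t) * (2 : ℝ) ^ ((n : ℝ) * t * (R - I)) := by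
    refine h5.trans ?_
    rw [← mul_assoc, ← Real.mul_rpow hc hτ]
    calc _ ≤ (((n : ℝ) + 1) ^ (K * ee d) * (2 : ℝ) ^ ((n : ℝ) * R)) ^ t *
          (2:ℝ) ^ (-((n:ℝ) * t * I)) := by
          apply mul_le_mul _ _ (by positivity) (by positivity)
          · exact Real.rpow_le_rpow (mul_nonneg hc hτ) hcU ht0.le
          · apply Real.rpow_le_rpow_of_exponent_le (by norm_num)
            have : 0 ≤ (n:ℝ) * t := by positivity
            nlinarith
      _ = _ := by
          rw [Real.mul_rpow (by positivity) (by positivity), ← Real.rpow_natCast,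
            ← Real.rpow_mul hn1.le, ← Real.rpow_mul (by norm_num), mul_assoc,
            ← Real.rpow_add (by norm_num)]
          push_cast
          congr 2
          ring
  have hee : 2 * (ee d : ℝ) + 2 = d * (d + 1) := by exact_mod_cast ee_spec hd
  have e1 : ((N : ℝ) - 1) + t * K * ((d : ℝ) - 1) * (d : ℝ) / 2 + ((d : ℝ) - 1) * K * t =
      ((N - 1 : ℕ) : ℝ) + (K : ℝ) * ee d * t := by
    rw [Nat.cast_sub hN]
    have : (ee d : ℝ) = (d * (d + 1) - 2) / 2 := by linarith
    rw [this]
    push_cast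
    ring
  rw [e1, Real.rpow_add hn1, Real.rpow_natCast]
  calc (1 + ε) ^ n * L ≤ (1 + ε) ^ n * (((n : ℝ) + 1) ^ (N - 1) *
        (((n : ℝ) + 1) ^ ((K : ℝ) * ee d * t) * (2 : ℝ) ^ ((n : ℝ) * t * (R - I)))) := by
        apply mul_le_mul_of_nonneg_left _ (by positivity)
        exact h3.trans (mul_le_mul_of_nonneg_left h6 (by positivity))
    _ = _ := by ring

end Part11

/-- Under Assumption A, for every `n ≥ 1` and `R̂ > 0` there is a universal
test `T_n`, `0 ⪯ T_n ⪯ I`, satisfying the two operational bounds (i) and (ii) for every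
probability distribution `P` on `𝒳`, every `t ∈ (0,1)`, every `ε > 0`, and every finite
`𝒮_ε ⊆ 𝒮` witnessing Assumption A at `ε`. -/
theorem statement3 {𝒳 𝒮 : Type*} [Fintype 𝒳] [DecidableEq 𝒳] [Nonempty 𝒮] {d : ℕ}
    (ρ : 𝒳 → 𝒮 → Matrix (Fin d) (Fin d) ℂ)
    (hρ : ∀ x s, IsDensity (ρ x s))
    (hAss : AssumptionA ρ)
    (n : ℕ) (hn : 1 ≤ n) (Rhat : ℝ) (hR : 0 < Rhat) :
    ∃ T : Matrix ((Fin n → 𝒳) × (Fin n → Fin d)) ((Fin n → 𝒳) × (Fin n → Fin d)) ℂ,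
      T.PosSemidef ∧ (1 - T).PosSemidef ∧
      ∀ P : 𝒳 → ℝ, (∀ x, 0 ≤ P x) → (∑ x, P x = 1) →
      ∀ t : ℝ, t ∈ Set.Ioo (0 : ℝ) 1 →
      ∀ ε : ℝ, 0 < ε →
      ∀ Sε : Finset 𝒮,
        (∀ s : 𝒮, ∃ s' ∈ Sε, ∀ x : 𝒳, Loewner (ρ x s) ((1 + ε) • ρ x s')) →
        (∀ sv : Fin n → 𝒮,
          (Matrix.trace ((1 - T) *
            cqState (fun xv : Fin n → 𝒳 => ∏ k, P (xv k))
              (fun xv => tensorFam fun k => ρ (xv k) (sv k)))).re ≤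
            ((n : ℝ) + 1) ^
                (((Sε.card : ℝ) - 1)
                  + t * (Fintype.card 𝒳) * ((d : ℝ) - 1) * (d : ℝ) / 2
                  + ((d : ℝ) - 1) * (Fintype.card 𝒳) * t) *
              (1 + ε) ^ n *
              (2 : ℝ) ^ ((n : ℝ) * t *
                (Rhat - ⨅ Q : {Q : 𝒮 → ℝ // (∀ s, 0 ≤ Q s) ∧ (∀ s ∉ Sε, Q s = 0) ∧
                    ∑ s ∈ Sε, Q s = 1},
                  renyiI P (fun x => ∑ s ∈ Sε, Q.1 s • ρ x s) t))) ∧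
        (∀ σ : Matrix (Fin n → Fin d) (Fin n → Fin d) ℂ, IsDensity σ →
          (Matrix.trace (T *
            cqState (fun xv : Fin n → 𝒳 => ∏ k, P (xv k)) (fun _ => σ))).re ≤
            (n : ℝ) ^ ((d : ℝ) * ((d : ℝ) - 1) / 2) * (numPartLe n d : ℝ) *
              (2 : ℝ) ^ (-(n : ℝ) * Rhat)) := by
  classical
  have key : ∀ P : 𝒳 → ℝ, (∀ x, 0 ≤ P x) → (∑ x, P x = 1) →
      ∀ t : ℝ, t ∈ Set.Ioo (0 : ℝ) 1 → ∀ Sε : Finset 𝒮, ∀ Q : 𝒮 → ℝ, (∀ s, 0 ≤ Q s) →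
      (∀ s ∉ Sε, Q s = 0) → ∑ s ∈ Sε, Q s = 1 →
      (⨅ Q : {Q : 𝒮 → ℝ // (∀ s, 0 ≤ Q s) ∧ (∀ s ∉ Sε, Q s = 0) ∧ ∑ s ∈ Sε, Q s = 1},
                  renyiI P (fun x => ∑ s ∈ Sε, Q.1 s • ρ x s) t) ≤
        renyiI P (fun x => ∑ s ∈ Sε, Q s • ρ x s) t := by
    intro P hP hP1 t ht Sε Q hQ hQ0 hQ1
    have hd := inf_d hρ hP1
    refine ciInf_le (f := fun Q : {Q : 𝒮 → ℝ // (∀ s, 0 ≤ Q s) ∧ (∀ s ∉ Sε, Q s = 0) ∧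
      ∑ s ∈ Sε, Q s = 1} => renyiI P (fun x => ∑ s ∈ Sε, Q.1 s • ρ x s) t) ?_ ⟨Q, hQ, hQ0, hQ1⟩
    refine ⟨-((1 - t) / t) * Real.logb 2 d, ?_⟩
    rintro _ ⟨Q', rfl⟩
    exact renyi_lower hP hP1 hd (fun x => mix_dens (hρ x) Sε Q'.2.1 Q'.2.2.2) ht
  have hn0 : (1 : ℝ) ≤ n := by exact_mod_cast hn
  by_cases hX : 2 ≤ Fintype.card 𝒳
  · have hne : Nonempty 𝒳 := Fintype.card_pos_iff.mp (by omega)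
    have hd : 0 < d := by
      obtain ⟨x⟩ := hne
      obtain ⟨s⟩ := ‹Nonempty 𝒮›
      exact dens_d (hρ x s)
    obtain ⟨T, σU, c, hT1, hT2, hσU, hc, hcU, hii, hi⟩ := core hX hn hd Rhat
    have hsub : 1 - cqState (fun _ => 1) (symT T) =
        cqState (fun _ => 1) (symT fun x => 1 - T x) := by
      rw [cq_one_sub]
      congr 1
      funext x
      exact symT_one_sub T x
    refine ⟨cqState (fun _ => 1) (symT T), cq_psd (symT_psd hT1), ?_, ?_⟩
    · rw [hsub]
      exact cq_psd (symT_psd hT2)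
    intro P hP hP1 t ht ε hε Sε hS
    have hw : ∀ x : Fin n → 𝒳, 0 ≤ ∏ k, P (x k) := fun x => Finset.prod_nonneg fun k _ => hP _
    refine ⟨fun sv => ?_, fun σ hσ => ?_⟩
    · rw [hsub, cq_mul, cq_trace]
      simp only [one_mul]
      choose f hf1 hf2 using hS
      have h1 : ∀ x : Fin n → 𝒳, (∏ k, P (x k)) *
          (symT (fun x => 1 - T x) x * tensorFam fun k => ρ (x k) (sv k)).trace.re ≤
          (1 + ε) ^ n * ((∏ k, P (x k)) * (symT (fun x => 1 - T x) x *
            tensorFam fun k => ρ (x k) (f (sv k))).trace.re) := by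
        intro x
        have h2 := la_trace_mono_right (symT_psd hT2 x)
          (eps_mono (fun k => (hρ (x k) (sv k)).1) (fun k => hf2 (sv k) (x k)))
        rw [Matrix.mul_smul, Matrix.trace_smul, smul_eq_mul, Complex.re_ofReal_mul] at h2
        rw [mul_left_comm]
        exact mul_le_mul_of_nonneg_left h2 (hw x)
      refine (Finset.sum_le_sum fun x _ => h1 x).trans ?_
      rw [← Finset.mul_sum]
      obtain ⟨sb, hsb⟩ : ∃ sb : Fin n → Sε, ∀ k, (sb k : 𝒮) = f (sv k) :=
        ⟨fun k => ⟨f (sv k), hf1 (sv k)⟩, fun k => rfl⟩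
      simp only [← hsb]
      have h3 := i_fin hn hT2 (A := fun x (s : Sε) => ρ x s) (fun x s => hρ x s) hP sb
      obtain ⟨Q, hQd⟩ : ∃ Q : 𝒮 → ℝ, Q = fun s => if h : s ∈ Sε then (fib sb ⟨s, h⟩ : ℝ) / n else 0 :=
        ⟨_, rfl⟩
      have hQv : ∀ a : Sε, Q a = (fib sb a : ℝ) / n := by
        intro a
        rw [hQd]
        simp
      have hQ : ∀ s, 0 ≤ Q s := by
        intro s
        rw [hQd]
        dsimp only
        split_ifs <;> positivity
      have hQ0 : ∀ s ∉ Sε, Q s = 0 := by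
        intro s hs
        rw [hQd]
        simp [hs]
      have hQ1 : ∑ s ∈ Sε, Q s = 1 := by
        rw [← Finset.sum_coe_sort Sε Q]
        simp only [hQv]
        rw [← Finset.sum_div, ← Nat.cast_sum, fib_sum, Fintype.card_fin]
        exact div_self (by positivity)
      have hω : ∀ x, IsDensity (∑ s ∈ Sε, Q s • ρ x s) := fun x => mix_dens (hρ x) Sε hQ hQ1
      have hmix : ∀ x, ∑ a : Sε, ((fib sb a : ℝ) / n) • ρ x a = ∑ s ∈ Sε, Q s • ρ x s := by
        intro x
        rw [← Finset.sum_coe_sort Sε (fun s => Q s • ρ x s)]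
        simp only [hQv]
      simp only [hmix] at h3
      have h4 := i_bound hn hP hω ht hσU
      have h5 : ∑ x : Fin n → 𝒳, (∏ k, P (x k)) *
          ((1 - T x) * tensorFam fun k => ∑ s ∈ Sε, Q s • ρ (x k) s).trace.re ≤
          c ^ t * (σU.trace.re ^ t * (2:ℝ) ^ (-((n:ℝ) * t *
            renyiI P (fun x => ∑ s ∈ Sε, Q s • ρ x s) t))) := by
        refine le_trans ?_ (mul_le_mul_of_nonneg_left h4 (Real.rpow_nonneg hc.le t))
        rw [Finset.mul_sum]
        refine Finset.sum_le_sum fun x _ => ?_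
        rw [mul_left_comm]
        exact mul_le_mul_of_nonneg_left
          (hi x (fun x => ∑ s ∈ Sε, Q s • ρ x s) hω t ht) (hw x)
      have hcard : 1 ≤ Sε.card := by
        obtain ⟨s⟩ := ‹Nonempty 𝒮›
        exact Finset.card_pos.mpr ⟨f s, hf1 s⟩
      rw [Fintype.card_coe] at h3
      exact final_i hn hd hcard ht hε hc.le (Complex.le_def.mp hσU.trace_nonneg).1 hcU
        (key P hP hP1 t ht Sε Q hQ hQ0 hQ1) h3 h5
    · rw [cq_mul, cq_trace]
      simp only [one_mul]
      refine (ii_fin hii hP hP1 hσ).trans (le_of_eq ?_)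
      rw [exp_conv hd]
  · have hss : Subsingleton 𝒳 := Fintype.card_le_one_iff_subsingleton.mp (by omega)
    obtain ⟨c, hc⟩ : ∃ c : ℝ, c = (2 : ℝ) ^ (-(n : ℝ) * Rhat) := ⟨_, rfl⟩
    have hc0 : 0 ≤ c := by rw [hc]; positivity
    have hc1 : c ≤ 1 := by
      rw [hc]
      apply Real.rpow_le_one_of_one_le_of_nonpos (by norm_num)
      nlinarith
    have hsub : 1 - cqState (fun _ => 1)
        (fun _ : Fin n → 𝒳 => (c : ℂ) • (1 : Matrix (Fin n → Fin d) (Fin n → Fin d) ℂ)) =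
        cqState (fun _ => 1) (fun _ => ((1 - c : ℝ) : ℂ) • 1) := by
      rw [cq_one_sub]
      congr 1
      funext x
      rw [Complex.ofReal_sub, sub_smul, Complex.ofReal_one, one_smul]
    refine ⟨cqState (fun _ => 1) (fun _ => (c : ℂ) • 1),
      cq_psd fun _ => psd_smul Matrix.PosSemidef.one hc0, ?_, ?_⟩
    · rw [hsub]
      exact cq_psd fun _ => psd_smul Matrix.PosSemidef.one (by linarith)
    intro P hP hP1 t ht ε hε Sε hS
    have hd := inf_d hρ hP1
    refine ⟨fun sv => ?_, fun σ hσ => ?_⟩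
    · rw [hsub, cq_mul, cq_trace]
      simp only [one_mul, smul_mul_assoc, Matrix.trace_smul, smul_eq_mul, Complex.re_ofReal_mul]
      have e1 : ∀ x : Fin n → 𝒳, (tensorFam fun k => ρ (x k) (sv k)).trace = 1 :=
        fun x => (tf_density fun k => hρ (x k) (sv k)).2
      simp only [e1, Complex.one_re, mul_one]
      rw [← Finset.sum_mul, sum_w hP1, one_mul]
      obtain ⟨s0, hs0, _⟩ := hS (Classical.arbitrary 𝒮)
      have hQ : ∀ s, 0 ≤ (Pi.single s0 1 : 𝒮 → ℝ) s := by
        intro s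
        by_cases h : s = s0
        · subst h; simp
        · simp [h]
      have hQ1 : ∑ s ∈ Sε, (Pi.single s0 1 : 𝒮 → ℝ) s = 1 := by
        rw [Finset.sum_pi_single']
        simp [hs0]
      have hk := key P hP hP1 t ht Sε (Pi.single s0 1) hQ
        (by
          intro s hs
          have : s ≠ s0 := fun h => hs (h ▸ hs0)
          simp [this])
        hQ1
      rw [renyi_single hP1 (fun x => mix_dens (hρ x) Sε hQ hQ1) ht] at hk
      have hcard : (1:ℝ) ≤ Sε.card := by exact_mod_cast Finset.card_pos.mpr ⟨s0, hs0⟩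
      have hd1 : (1:ℝ) ≤ d := by exact_mod_cast hd
      have g1 : (1:ℝ) ≤ ((n : ℝ) + 1) ^ (((Sε.card : ℝ) - 1)
                  + t * (Fintype.card 𝒳) * ((d : ℝ) - 1) * (d : ℝ) / 2
                  + ((d : ℝ) - 1) * (Fintype.card 𝒳) * t) := by
        apply Real.one_le_rpow (by linarith)
        have ht0 := ht.1.le
        have : 0 ≤ (d:ℝ) - 1 := by linarith
        have : 0 ≤ (Sε.card : ℝ) - 1 := by linarith
        positivity
      have g2 : (1:ℝ) ≤ (1 + ε) ^ n := one_le_pow₀ (by linarith)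
      refine le_trans (b := 1) (by linarith) ?_
      refine one_le_mul_of_one_le_of_one_le (one_le_mul_of_one_le_of_one_le g1 g2) ?_
      apply Real.one_le_rpow (by norm_num)
      have ht0 := ht.1.le
      have : 0 ≤ (n:ℝ) * t := by positivity
      exact mul_nonneg this (by linarith)
    · rw [cq_mul, cq_trace]
      simp only [one_mul, smul_mul_assoc, Matrix.trace_smul, smul_eq_mul, Complex.re_ofReal_mul,
        hσ.2, Complex.one_re, mul_one]
      rw [← Finset.sum_mul, sum_w hP1, one_mul, ← hc, ← exp_conv hd]
      have g1 : (1:ℝ) ≤ (n : ℝ) ^ (d * (d - 1) / 2) := one_le_pow₀ hn0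
      have g2 : (1:ℝ) ≤ numPartLe n d := by exact_mod_cast numPart_pos hd
      exact le_mul_of_one_le_left hc0 (one_le_mul_of_one_le_of_one_le g1 g2)
end
end

section
/- If for every x∈𝒳 the set D_x := {ρ_{x,s} : s∈𝒮} is a compact subset of the set of density matrices on H_B, and every ρ_{x,s} is positive definite (full rank), then the family {ρ_{x,s}} satisfies Assumption A. -/
open scoped ComplexOrder

noncomputable section

open Topology Filter in
theorem posDef_eventually_posSemidef {d : ℕ} {A : Matrix (Fin d) (Fin d) ℂ} (hA : A.PosDef) :
    ∀ᶠ B in 𝓝 A, B.IsHermitian → B.PosSemidef := by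
  have key : ∀ᶠ B in 𝓝 A, ∀ v ∈ Metric.sphere (0 : Fin d → ℂ) 1,
      0 < (star v ⬝ᵥ (B.mulVec v)).re := by
    apply (isCompact_sphere (0 : Fin d → ℂ) 1).eventually_forall_of_forall_eventually
    intro v hv
    have hv0 : v ≠ 0 := by
      rintro rfl
      simp at hv
    have hc : Continuous fun z : Matrix (Fin d) (Fin d) ℂ × (Fin d → ℂ) =>
        (star z.2 ⬝ᵥ (z.1.mulVec z.2)).re :=
      Complex.continuous_re.comp
        (continuous_snd.star.dotProduct (continuous_fst.matrix_mulVec continuous_snd))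
    exact hc.continuousAt.eventually_const_lt
      (Complex.pos_iff.mp (hA.dotProduct_mulVec_pos hv0)).1
  filter_upwards [key] with B hB hH
  refine .of_dotProduct_mulVec_nonneg hH fun x => ?_
  rw [Complex.nonneg_iff]
  refine ⟨?_, (hH.im_star_dotProduct_mulVec_self x).symm⟩
  by_cases hx : x = 0
  · simp [hx]
  have hn : 0 < ‖x‖ := norm_pos_iff.mpr hx
  have h1 := hB ((‖x‖⁻¹ : ℝ) • x) (by simp [norm_smul, hn.ne'])
  rw [Matrix.mulVec_smul, star_smul, smul_dotProduct, dotProduct_smul] at h1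
  simp only [star_trivial, Complex.real_smul, Complex.re_ofReal_mul] at h1
  have h2 : 0 < ‖x‖⁻¹ := inv_pos.mpr hn
  exact (pos_of_mul_pos_right (pos_of_mul_pos_right h1 h2.le) h2.le).le

/-- If for each `x` the set `D_x = {ρ_{x,s} : s ∈ 𝒮}` is compact and every
`ρ_{x,s}` is positive definite (full rank), then the family satisfies Assumption A. -/
theorem statement4 {𝒳 𝒮 : Type*} [Fintype 𝒳] [Nonempty 𝒮] {d : ℕ}
    (ρ : 𝒳 → 𝒮 → Matrix (Fin d) (Fin d) ℂ)
    (hρ : ∀ x s, IsDensity (ρ x s))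
    (hcompact : ∀ x, IsCompact (Set.range fun s => ρ x s))
    (hposdef : ∀ x s, (ρ x s).PosDef) :
    AssumptionA ρ := by
  classical
  intro ε hε
  have hK := isCompact_univ_pi hcompact
  have main : ∃ Sε : Finset 𝒮, ∀ s : 𝒮,
      (fun x => ρ x s) ∈ Set.univ.pi (fun x => Set.range fun s => ρ x s) →
      ∃ s' ∈ Sε, ∀ x : 𝒳, Loewner (ρ x s) ((1 + ε) • ρ x s') := by
    refine hK.induction_on (p := fun T => ∃ Sε : Finset 𝒮, ∀ s : 𝒮, (fun x => ρ x s) ∈ T →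
      ∃ s' ∈ Sε, ∀ x : 𝒳, Loewner (ρ x s) ((1 + ε) • ρ x s')) ?_ ?_ ?_ ?_
    · exact ⟨∅, fun s hs => hs.elim⟩
    · rintro S T hST ⟨F, hF⟩
      exact ⟨F, fun s hs => hF s (hST hs)⟩
    · rintro S T ⟨F, hF⟩ ⟨G, hG⟩
      refine ⟨F ∪ G, fun s hs => ?_⟩
      rcases hs with hs | hs
      · obtain ⟨s', h1, h2⟩ := hF s hs
        exact ⟨s', Finset.mem_union_left _ h1, h2⟩
      · obtain ⟨s', h1, h2⟩ := hG s hs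
        exact ⟨s', Finset.mem_union_right _ h1, h2⟩
    · intro p hp
      have hev : ∀ᶠ z in nhds (p, p), ∀ x : 𝒳,
          ((1 + ε) • z.2 x - z.1 x).IsHermitian → ((1 + ε) • z.2 x - z.1 x).PosSemidef := by
        rw [Filter.eventually_all]
        intro x
        have hc : Continuous fun z : (𝒳 → Matrix (Fin d) (Fin d) ℂ) ×
            (𝒳 → Matrix (Fin d) (Fin d) ℂ) => (1 + ε) • z.2 x - z.1 x := by
          fun_prop
        have hpd : ((1 + ε) • p x - p x).PosDef := by
          obtain ⟨s, hs⟩ := hp x (Set.mem_univ x)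
          have hs' : ρ x s = p x := hs
          have h3 : (1 + ε) • p x - p x = ε • p x := by
            rw [add_smul, one_smul, add_sub_cancel_left]
          rw [h3, ← hs']
          exact (hposdef x s).smul hε
        exact hc.continuousAt.eventually (posDef_eventually_posSemidef hpd)
      rw [nhds_prod_eq] at hev
      obtain ⟨T, hT, h⟩ := (Filter.eventually_prod_self_iff (r := fun (q q' : 𝒳 → Matrix (Fin d) (Fin d) ℂ) => ∀ x : 𝒳,
        ((1 + ε) • q' x - q x).IsHermitian → ((1 + ε) • q' x - q x).PosSemidef)).mp hev
      refine ⟨T, mem_nhdsWithin_of_mem_nhds hT, ?_⟩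
      by_cases hne : ∃ s', (fun x => ρ x s') ∈ T
      · obtain ⟨s', hs'⟩ := hne
        refine ⟨{s'}, fun s hs => ⟨s', Finset.mem_singleton_self _, fun x => ?_⟩⟩
        refine h _ hs _ hs' x ?_
        exact ((hposdef x s').smul (by positivity : 0 < 1 + ε)).1.sub (hposdef x s).1
      · exact ⟨∅, fun s hs => (hne ⟨s, hs⟩).elim⟩
  obtain ⟨F, hF⟩ := main
  exact ⟨F, fun s => hF s fun x _ => ⟨s, rfl⟩⟩
end
end
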